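/- Let n ≥ 1 and let K be a smooth, strictly convex body in ℝ^{n+1} with positive support function h on S^n. Set M := max_{S^n} h(x)·det(A(x)+x⊗x) and m := min_{S^n} h(x)·det(A(x)+x⊗x) (so M = max h/𝒦, m = min h/𝒦). Then there exists a constant γ > 0 depending only on n such that δ₂(K̄, B) ≤ γ·(M/m − 1)^{1/2}, where K̄ = (K − c(K))/(⨍ h̃ dθ) is the translated and rescaled body. -/

import Mathlib

open MeasureTheory Metric Real
open scoped InnerProductSpace ENNReal Topology

noncomputable section

/-- Euclidean space `ℝ^{n+1}`. -/
abbrev Eu (n : ℕ) : Type := EuclideanSpace ℝ (Fin (n + 1))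

/-- The unit sphere `S^n ⊆ ℝ^{n+1}` as a subtype. -/
abbrev Sph (n : ℕ) : Type := Metric.sphere (0 : Eu n) 1

/-- The spherical Lebesgue (surface) measure on `S^n`. -/
def sphMeas (n : ℕ) : Measure (Sph n) := (volume : Measure (Eu n)).toSphere

/-- The support function of a set `K ⊆ ℝ^{n+1}`. -/
def sfn {n : ℕ} (K : Set (Eu n)) (z : Eu n) : ℝ :=
  sSup ((fun y => ⟪z, y⟫_ℝ) '' K)

/-- The Hessian endomorphism `A(x) = D(∇ h_K)(x)`. -/
def hessA {n : ℕ} (K : Set (Eu n)) (x : Eu n) : Eu n →L[ℝ] Eu n :=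
  fderiv ℝ (gradient (sfn K)) x

/-- The rank-one endomorphism `x ⊗ x : v ↦ ⟨v, x⟩ x`. -/
def tens {n : ℕ} (x : Eu n) : Eu n →L[ℝ] Eu n :=
  (innerSL ℝ x).smulRight x

/-- `det (A(x) + x ⊗ x)`, the reciprocal Gauss curvature `1/𝒦` at `x ∈ S^n`. -/
def rK {n : ℕ} (K : Set (Eu n)) (x : Eu n) : ℝ :=
  LinearMap.det ((hessA K x + tens x : Eu n →L[ℝ] Eu n) : Eu n →ₗ[ℝ] Eu n)

/-- `K` is a smooth, strictly convex body with positive support function. -/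
structure IsSmoothConvexBody {n : ℕ} (K : Set (Eu n)) : Prop where
  compact : IsCompact K
  convex : Convex ℝ K
  interior_nonempty : (interior K).Nonempty
  pos : ∀ x : Sph n, 0 < sfn K x
  smooth : ContDiffOn ℝ (⊤ : ℕ∞) (sfn K) {(0 : Eu n)}ᶜ
  posdef : ∀ x : Sph n, ∀ v : Eu n, v ≠ 0 →
    0 < ⟪(hessA K (x : Eu n) + tens (x : Eu n)) v, v⟫_ℝ

/-- The density `h·det(A + x⊗x)` of the measure `dV` with respect to `dθ`. -/
def dens {n : ℕ} (K : Set (Eu n)) (x : Eu n) : ℝ := sfn K x * rK K x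

/-- The centroid-type point `c(K) = (∫ ∇h_K dV)/(∫ dV)`. -/
def cK {n : ℕ} (K : Set (Eu n)) : Eu n :=
  (∫ x : Sph n, dens K x ∂sphMeas n)⁻¹ •
    ∫ x : Sph n, dens K x • gradient (sfn K) x ∂sphMeas n

/-- The support function of the translated body `K - c(K)`. -/
def tsfn {n : ℕ} (K : Set (Eu n)) (x : Eu n) : ℝ := sfn K x - ⟪x, cK K⟫_ℝ


/-- One-dimensional Brunn-Minkowski. -/
lemma bm_one_dim {A B C : Set ℝ} (hA : MeasurableSet A) (hB : MeasurableSet B)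
    (hAn : A.Nonempty) (hBn : B.Nonempty)
    (h : ∀ x ∈ A, ∀ y ∈ B, x + y ∈ C) : volume A + volume B ≤ volume C := by
  have key : ∀ K ⊆ A, IsCompact K → K.Nonempty → ∀ L ⊆ B, IsCompact L → L.Nonempty →
      volume K + volume L ≤ volume C := by
    intro K hKA hK hKn L hLB hL hLn
    obtain ⟨a, haK, ha⟩ := hK.exists_isGreatest hKn
    obtain ⟨b, hbL, hb⟩ := hL.exists_isLeast hLn
    have e1 : volume ((fun x => x + b) '' K) = volume K := by
      simp [Set.image_add_right]
    have e2 : volume ((fun x => a + x) '' L) = volume L := by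
      simp [Set.image_add_left]
    have hm : MeasurableSet ((fun x => a + x) '' L) :=
      (hL.image (continuous_const.add continuous_id)).measurableSet
    have hd : AEDisjoint volume ((fun x => x + b) '' K) ((fun x => a + x) '' L) := by
      refine measure_mono_null (t := {a + b}) ?_ (by simp)
      rintro z ⟨⟨x, hx, rfl⟩, ⟨y, hy, hxy⟩⟩
      have h1 := ha hx
      have h2 := hb hy
      simp only at hxy ⊢
      simp
      linarith
    rw [← e1, ← e2, ← measure_union₀ hm.nullMeasurableSet hd]
    apply measure_mono
    rintro z (⟨x, hx, rfl⟩ | ⟨x, hx, rfl⟩)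
    · exact h _ (hKA hx) _ (hLB hbL)
    · exact h _ (hKA haK) _ (hLB hx)
  have key2 : ∀ K ⊆ A, IsCompact K → ∀ L ⊆ B, IsCompact L →
      volume K + volume L ≤ volume C := by
    intro K hKA hK L hLB hL
    obtain ⟨a, ha⟩ := hAn
    obtain ⟨b, hb⟩ := hBn
    refine le_trans ?_ (key (insert a K) (Set.insert_subset ha hKA) (hK.insert a) (by simp)
      (insert b L) (Set.insert_subset hb hLB) (hL.insert b) (by simp))
    gcongr <;> exact Set.subset_insert _ _
  rw [hA.measure_eq_iSup_isCompact, hB.measure_eq_iSup_isCompact]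
  simp only [iSup_and']
  refine ENNReal.biSup_add_biSup_le' ⟨(∅ : Set ℝ), by simp⟩ ⟨(∅ : Set ℝ), by simp⟩ ?_
  intro K hK L hL
  exact key2 K hK.1 hK.2 L hL.1 hL.2

def PLProp {E : Type*} [MeasurableSpace E] [AddCommGroup E] [Module ℝ E] (μ : Measure E) : Prop :=
  ∀ f g h : E → ℝ≥0∞, Measurable f → Measurable g → Measurable h →
    (∀ x y, f x * g y ≤ h ((2:ℝ)⁻¹ • (x + y)) ^ 2) →
    (∫⁻ x, f x ∂μ) * (∫⁻ x, g x ∂μ) ≤ (∫⁻ x, h x ∂μ) ^ 2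

lemma PLProp.prod {E F : Type*} [MeasurableSpace E] [AddCommGroup E] [Module ℝ E]
    [MeasurableSpace F] [AddCommGroup F] [Module ℝ F] {μ : Measure E} {ν : Measure F}
    [SFinite μ] [SFinite ν] (hμ : PLProp μ) (hν : PLProp ν) : PLProp (μ.prod ν) := by
  intro f g h hf hg hh H
  rw [lintegral_prod _ hf.aemeasurable, lintegral_prod _ hg.aemeasurable,
    lintegral_prod _ hh.aemeasurable]
  apply hμ _ _ _ hf.lintegral_prod_right' hg.lintegral_prod_right' hh.lintegral_prod_right'
  intro x y
  apply hν
  · fun_prop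
  · fun_prop
  · fun_prop
  · intro a b
    exact H (x, a) (y, b)

lemma PLProp.of_equiv {E F : Type*} [MeasurableSpace E] [AddCommGroup E] [Module ℝ E]
    [MeasurableSpace F] [AddCommGroup F] [Module ℝ F] {μ : Measure E} {ν : Measure F}
    (e : E ≃ᵐ F) (he : MeasurePreserving e μ ν)
    (hadd : ∀ x y, e ((2:ℝ)⁻¹ • (x + y)) = (2:ℝ)⁻¹ • (e x + e y))
    (hμ : PLProp μ) : PLProp ν := by
  intro f g h hf hg hh H
  rw [← he.lintegral_comp hf, ← he.lintegral_comp hg, ← he.lintegral_comp hh]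
  apply hμ
  · exact hf.comp e.measurable
  · exact hg.comp e.measurable
  · exact hh.comp e.measurable
  · intro x y
    rw [hadd]
    exact H _ _

lemma PL_real_norm (f g h : ℝ → ℝ) (hf : Measurable f) (hg : Measurable g) (hh : Measurable h)
    (hf0 : ∀ x, 0 ≤ f x) (hg0 : ∀ x, 0 ≤ g x) (hh0 : ∀ x, 0 ≤ h x)
    (hf1 : ∀ x, f x ≤ 1) (hg1 : ∀ x, g x ≤ 1)
    (hfs : ∀ t < 1, ∃ x, t < f x) (hgs : ∀ t < 1, ∃ x, t < g x)
    (H : ∀ x y, f x * g y ≤ h (2⁻¹ * (x + y)) ^ 2) :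
    (∫⁻ x, ENNReal.ofReal (f x)) + (∫⁻ x, ENNReal.ofReal (g x)) ≤
      2 * ∫⁻ x, ENNReal.ofReal (h x) := by
  rw [lintegral_eq_lintegral_meas_lt _ (ae_of_all _ hf0) hf.aemeasurable,
    lintegral_eq_lintegral_meas_lt _ (ae_of_all _ hg0) hg.aemeasurable,
    lintegral_eq_lintegral_meas_lt _ (ae_of_all _ hh0) hh.aemeasurable]
  rw [← lintegral_const_mul' _ _ (by simp), ← lintegral_add_left]
  · apply setLIntegral_mono' measurableSet_Ioi
    intro t ht
    have ht : 0 < t := ht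
    rcases lt_or_ge t 1 with h1 | h1
    · have e : volume ((fun x => x * (2:ℝ)⁻¹) ⁻¹' {a | t < h a}) = 2 * volume {a | t < h a} := by
        rw [Real.volume_preimage_mul_right (by norm_num)]
        simp
      rw [← e]
      apply bm_one_dim (measurableSet_lt measurable_const hf) (measurableSet_lt measurable_const hg)
        (hfs t h1) (hgs t h1)
      intro x hx y hy
      have hx : t < f x := hx
      have hy : t < g y := hy
      show t < h ((x + y) * 2⁻¹)
      have := H x y
      rw [mul_comm (2:ℝ)⁻¹] at this
      have h3 : t * t < f x * g y := by nlinarith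
      nlinarith [hh0 ((x + y) * 2⁻¹)]
    · have e1 : {a | t < f a} = ∅ := by
        ext a; simp; linarith [hf1 a]
      have e2 : {a | t < g a} = ∅ := by
        ext a; simp; linarith [hg1 a]
      rw [e1, e2]; simp
  · apply Antitone.measurable
    intro s t hst
    apply measure_mono
    intro x hx
    exact lt_of_le_of_lt hst hx

lemma ennreal_amgm (a b c : ℝ≥0∞) (h : a + b ≤ 2 * c) : a * b ≤ c ^ 2 := by
  rcases eq_or_ne c ⊤ with rfl | hc
  · simp
  have h2 : 2 * c ≠ ⊤ := ENNReal.mul_ne_top (by simp) hc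
  have ha : a ≠ ⊤ := ne_top_of_le_ne_top h2 (le_trans (by simp) h)
  have hb : b ≠ ⊤ := ne_top_of_le_ne_top h2 (le_trans (by simp) h)
  lift a to NNReal using ha
  lift b to NNReal using hb
  lift c to NNReal using hc
  norm_cast at h ⊢
  rw [← NNReal.coe_le_coe] at h ⊢
  push_cast at h ⊢
  nlinarith [sq_nonneg ((a:ℝ) - b), a.2, b.2, c.2]

lemma PL_real_bdd (f g h : ℝ → ℝ≥0∞) (hf : Measurable f) (hg : Measurable g) (hh : Measurable h)
    (k : ℕ) (hfk : ∀ x, f x ≤ k) (hgk : ∀ x, g x ≤ k)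
    (H : ∀ x y, f x * g y ≤ h (2⁻¹ * (x + y)) ^ 2) :
    (∫⁻ x, f x) * (∫⁻ x, g x) ≤ (∫⁻ x, h x) ^ 2 := by
  obtain ⟨a, ha⟩ : ∃ a, a = ⨆ x, f x := ⟨_, rfl⟩
  obtain ⟨b, hb⟩ : ∃ b, b = ⨆ x, g x := ⟨_, rfl⟩
  have hak : a ≤ k := by rw [ha]; exact iSup_le hfk
  have hbk : b ≤ k := by rw [hb]; exact iSup_le hgk
  have hfa : ∀ x, f x ≤ a := fun x => ha ▸ le_iSup f x
  have hgb : ∀ x, g x ≤ b := fun x => hb ▸ le_iSup g x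
  rcases eq_or_ne a 0 with h0 | ha0
  · have : ∀ x, f x = 0 := fun x => le_antisymm (h0 ▸ hfa x) bot_le
    simp [this]
  rcases eq_or_ne b 0 with h0 | hb0
  · have : ∀ x, g x = 0 := fun x => le_antisymm (h0 ▸ hgb x) bot_le
    simp [this]
  have haT : a ≠ ⊤ := ne_top_of_le_ne_top (by simp) hak
  have hbT : b ≠ ⊤ := ne_top_of_le_ne_top (by simp) hbk
  clear hak hbk
  lift a to NNReal using haT
  lift b to NNReal using hbT
  obtain ⟨s, hs⟩ : ∃ s, s = NNReal.sqrt (a * b) := ⟨_, rfl⟩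
  have hs2 : s ^ 2 = a * b := by rw [hs]; simp
  have ha0 : a ≠ 0 := by simpa using ha0
  have hb0 : b ≠ 0 := by simpa using hb0
  have hs0 : s ≠ 0 := by
    rintro rfl
    simp at hs2; tauto
  have hfT : ∀ x, f x ≠ ⊤ := fun x => ne_top_of_le_ne_top (by simp) (hfa x)
  have hgT : ∀ x, g x ≠ ⊤ := fun x => ne_top_of_le_ne_top (by simp) (hgb x)
  have hap : (0:ℝ) < a := by positivity
  have hbp : (0:ℝ) < b := by positivity
  have hsp : (0:ℝ) < s := by positivity
  have hs2' : (s:ℝ)^2 = a * b := by exact_mod_cast hs2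
  have hmT : ∀ x, min (h x) s ≠ ⊤ := fun x => ne_top_of_le_ne_top (b := (s:ℝ≥0∞)) (by simp) (min_le_right _ _)
  have main := PL_real_norm (fun x => (f x).toReal / a) (fun x => (g x).toReal / b)
    (fun x => (min (h x) s).toReal / s) (by fun_prop) (by fun_prop) (by fun_prop)
    (fun x => by positivity) (fun x => by positivity) (fun x => by positivity)
    (fun x => by
      rw [div_le_one hap]
      exact ENNReal.toReal_le_coe_of_le_coe (hfa x))
    (fun x => by
      rw [div_le_one hbp]
      exact ENNReal.toReal_le_coe_of_le_coe (hgb x))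
    (fun t ht => by
      by_contra hc
      push Not at hc
      have : (a : ℝ≥0∞) ≤ ENNReal.ofReal (t * a) := by
        rw [ha]
        apply iSup_le
        intro x
        have := hc x
        rw [div_le_iff₀ hap] at this
        exact ENNReal.le_ofReal_iff_toReal_le (hfT x) (le_trans (by positivity) this) |>.2 this
      rw [← ENNReal.ofReal_coe_nnreal, ENNReal.ofReal_le_ofReal_iff'] at this
      rcases this with h | h <;> nlinarith)
    (fun t ht => by
      by_contra hc
      push Not at hc
      have : (b : ℝ≥0∞) ≤ ENNReal.ofReal (t * b) := by
        rw [hb]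
        apply iSup_le
        intro x
        have := hc x
        rw [div_le_iff₀ hbp] at this
        exact ENNReal.le_ofReal_iff_toReal_le (hgT x) (le_trans (by positivity) this) |>.2 this
      rw [← ENNReal.ofReal_coe_nnreal, ENNReal.ofReal_le_ofReal_iff'] at this
      rcases this with h | h <;> nlinarith)
    (fun x y => by
      have h1 : f x * g y ≤ (min (h (2⁻¹ * (x + y))) s) ^ 2 := by
        rcases le_total (h (2⁻¹ * (x + y))) s with hc | hc
        · rw [min_eq_left hc]; exact H x y
        · rw [min_eq_right hc]
          have : (s:ℝ≥0∞)^2 = a * b := by exact_mod_cast hs2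
          rw [this]
          gcongr
          · exact hfa x
          · exact hgb y
      have h2 := ENNReal.toReal_mono (ENNReal.pow_ne_top (hmT _)) h1
      rw [ENNReal.toReal_mul, ENNReal.toReal_pow] at h2
      rw [div_pow, hs2', div_mul_div_comm]
      gcongr)
  have conv : ∀ (u : ℝ → ℝ≥0∞) (c : NNReal), c ≠ 0 → (∀ x, u x ≠ ⊤) →
      ∫⁻ x, ENNReal.ofReal ((u x).toReal / c) = (∫⁻ x, u x) / c := by
    intro u c hc hu
    rw [div_eq_mul_inv, ← lintegral_mul_const' _ _ (by simp [hc])]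
    congr 1; ext x
    rw [ENNReal.ofReal_div_of_pos (by positivity), ENNReal.ofReal_toReal (hu x)]
    simp [div_eq_mul_inv]
  rw [conv _ _ ha0 hfT, conv _ _ hb0 hgT, conv _ _ hs0 hmT] at main
  have := ennreal_amgm _ _ _ main
  have hle : ∫⁻ x, min (h x) s ≤ ∫⁻ x, h x := lintegral_mono fun x => min_le_left _ _
  have e2 : (s:ℝ≥0∞)^2 = a * b := by exact_mod_cast hs2
  have hs2T : (s:ℝ≥0∞)^2 ≠ ⊤ := by simp
  have hs20 : (s:ℝ≥0∞)^2 ≠ 0 := by simp [hs0]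
  have e3 : (∫⁻ x, f x) / a * ((∫⁻ x, g x) / b) = ((∫⁻ x, f x) * (∫⁻ x, g x)) / (s:ℝ≥0∞)^2 := by
    rw [e2, ENNReal.div_eq_inv_mul, ENNReal.div_eq_inv_mul, ENNReal.div_eq_inv_mul,
      ENNReal.mul_inv (by simp) (by simp)]
    ring
  have e4 : ((∫⁻ x, min (h x) s) / s) ^ 2 = (∫⁻ x, min (h x) s) ^ 2 / (s:ℝ≥0∞)^2 := by
    rw [ENNReal.div_eq_inv_mul, ENNReal.div_eq_inv_mul, mul_pow, ENNReal.inv_pow]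
  rw [e3, e4, ENNReal.div_le_iff hs20 hs2T, ENNReal.div_mul_cancel hs20 hs2T] at this
  exact this.trans (by gcongr)

lemma PL_real : PLProp (volume : Measure ℝ) := by
  intro f g h hf hg hh H
  have trunc : ∀ u : ℝ → ℝ≥0∞, Measurable u →
      ∫⁻ x, u x = ⨆ k : ℕ, ∫⁻ x, min (u x) k := by
    intro u hu
    rw [← lintegral_iSup]
    · congr 1; ext x
      apply le_antisymm
      · rcases eq_or_ne (u x) ⊤ with hx | hx
        · simp [hx, ENNReal.iSup_natCast]
        · obtain ⟨k, hk⟩ := ENNReal.exists_nat_gt hx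
          exact le_iSup_of_le k (by rw [min_eq_left hk.le])
      · exact iSup_le fun k => min_le_left _ _
    · intro k; fun_prop
    · intro i j hij x
      simp only
      gcongr
  have key : ∀ i j : ℕ, (∫⁻ x, min (f x) i) * (∫⁻ x, min (g x) j) ≤ (∫⁻ x, h x) ^ 2 := by
    intro i j
    apply PL_real_bdd _ _ _ (by fun_prop) (by fun_prop) hh (max i j)
    · intro x; refine (min_le_right _ _).trans ?_; exact_mod_cast le_max_left i j
    · intro x; refine (min_le_right _ _).trans ?_; exact_mod_cast le_max_right i j
    · intro x y
      refine le_trans ?_ (H x y)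
      gcongr <;> exact min_le_left _ _
  rw [trunc f hf, trunc g hg]
  rw [ENNReal.iSup_mul]
  apply iSup_le; intro i
  rw [ENNReal.mul_iSup]
  apply iSup_le; intro j
  exact key i j

lemma PL_pi (n : ℕ) : PLProp (volume : Measure (Fin n → ℝ)) := by
  induction n with
  | zero =>
    intro f g h hf hg hh H
    have : ∀ u : (Fin 0 → ℝ) → ℝ≥0∞, ∫⁻ x, u x = u 0 := by
      intro u
      rw [volume_pi, Measure.pi_of_empty (x := 0)]
      simp
    rw [this, this, this]
    simpa using H 0 0
  | succ n ih =>
    refine PLProp.of_equiv (MeasurableEquiv.piFinSuccAbove (fun _ : Fin (n+1) => ℝ) 0).symm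
      (volume_preserving_piFinSuccAbove (fun _ : Fin (n+1) => ℝ) 0).symm ?_ (PLProp.prod PL_real ih)
    intro x y
    ext i
    refine Fin.cases ?_ (fun j => ?_) i <;> simp [MeasurableEquiv.piFinSuccAbove] <;> ring

lemma PL_eucl (n : ℕ) : PLProp (volume : Measure (EuclideanSpace ℝ (Fin n))) := by
  refine PLProp.of_equiv (MeasurableEquiv.toLp 2 (Fin n → ℝ))
    (PiLp.volume_preserving_toLp (Fin n)) ?_ (PL_pi n)
  intro x y
  rfl

/-- Multiplicative Brunn-Minkowski. -/
lemma bm_mult {n : ℕ} (A B C : Set (EuclideanSpace ℝ (Fin n))) (hA : MeasurableSet A)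
    (hB : MeasurableSet B) (hC : MeasurableSet C)
    (H : ∀ x ∈ A, ∀ y ∈ B, (2:ℝ)⁻¹ • (x + y) ∈ C) :
    volume A * volume B ≤ volume C ^ 2 := by
  have := PL_eucl n (A.indicator 1) (B.indicator 1) (C.indicator 1)
    (measurable_one.indicator hA) (measurable_one.indicator hB) (measurable_one.indicator hC) ?_
  · simpa [lintegral_indicator_one, hA, hB, hC] using this
  · intro x y
    by_cases hx : x ∈ A
    · by_cases hy : y ∈ B
      · have := H x hx y hy
        rw [Set.indicator_of_mem hx, Set.indicator_of_mem hy, Set.indicator_of_mem this]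
        simp
      · simp [hy]
    · simp [hx]

instance sphMeas_fin (n : ℕ) : IsFiniteMeasure (sphMeas n) := by unfold sphMeas; infer_instance
instance sphMeas_pos (n : ℕ) : (sphMeas n).IsOpenPosMeasure := by unfold sphMeas; infer_instance

lemma sphMeas_ne_zero (n : ℕ) : sphMeas n ≠ 0 := by
  unfold sphMeas
  exact Measure.toSphere_ne_zero _

lemma polar_lintegral {n : ℕ} (F : Eu n → ℝ≥0∞) (hF : Measurable F) :
    ∫⁻ z, F z = ∫⁻ x : Sph n, (∫⁻ r in Set.Ioi (0:ℝ), ENNReal.ofReal (r ^ n) * F (r • (x : Eu n)))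
      ∂sphMeas n := by
  have h0 : ∫⁻ z, F z = ∫⁻ z in ({0}ᶜ : Set (Eu n)), F z := by
    rw [restrict_compl_singleton]
  have hm : MeasurableSet ({0}ᶜ : Set (Eu n)) := (measurableSet_singleton _).compl
  have hd : Module.finrank ℝ (Eu n) - 1 = n := by simp
  have hp := Measure.measurePreserving_homeomorphUnitSphereProd (volume : Measure (Eu n))
  rw [hd] at hp
  have hF' : Measurable (fun p : Sph n × Set.Ioi (0:ℝ) => F ((p.2 : ℝ) • (p.1 : Eu n))) := by
    apply hF.comp
    fun_prop
  have e1 := hp.lintegral_comp hF'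
  have e2 : ∀ z : ({0}ᶜ : Set (Eu n)), F ((((homeomorphUnitSphereProd (Eu n)) z).2 : ℝ) •
      (((homeomorphUnitSphereProd (Eu n)) z).1 : Eu n)) = F z := by
    intro z
    have : (z : Eu n) ≠ 0 := z.2
    congr 1
    simp only [homeomorphUnitSphereProd_apply_snd_coe, homeomorphUnitSphereProd_apply_fst_coe]
    rw [smul_smul, mul_inv_cancel₀ (by simpa using this), one_smul]
  simp only [e2] at e1
  rw [h0, ← lintegral_subtype_comap hm, e1, lintegral_prod _ hF'.aemeasurable]
  unfold sphMeas
  congr 1; ext x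
  have hx : Measurable (fun r : Set.Ioi (0:ℝ) => F ((r : ℝ) • (x : Eu n))) :=
    hF.comp (by fun_prop)
  rw [Measure.volumeIoiPow]
  refine (lintegral_withDensity_eq_lintegral_mul _ (by fun_prop) hx).trans ?_
  exact lintegral_subtype_comap measurableSet_Ioi
    (fun r : ℝ => ENNReal.ofReal (r ^ n) * F (r • (x : Eu n)))

lemma polar_integral {n : ℕ} (ψ : ℝ → ℝ) (g : Eu n → ℝ) :
    ∫ z : Eu n, ψ ‖z‖ * g (‖z‖⁻¹ • z) = (∫ x : Sph n, g x ∂sphMeas n) *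
      ∫ r in Set.Ioi (0:ℝ), r ^ n * ψ r := by
  have hd : Module.finrank ℝ (Eu n) - 1 = n := by simp
  have hp := Measure.measurePreserving_homeomorphUnitSphereProd (volume : Measure (Eu n))
  rw [hd] at hp
  calc ∫ z : Eu n, ψ ‖z‖ * g (‖z‖⁻¹ • z)
    _ = ∫ z : ({(0)}ᶜ : Set (Eu n)), ψ ‖z.1‖ * g (‖z.1‖⁻¹ • z.1) ∂((volume : Measure (Eu n)).comap (↑)) := by
      rw [integral_subtype_comap (measurableSet_singleton _).compl
        fun z : Eu n ↦ ψ ‖z‖ * g (‖z‖⁻¹ • z), restrict_compl_singleton]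
    _ = ∫ p : Sph n × Set.Ioi (0:ℝ), g p.1 * ψ p.2 ∂(sphMeas n).prod (.volumeIoiPow n) := by
      have := hp.integral_comp (Homeomorph.measurableEmbedding _)
        (fun p : Sph n × Set.Ioi (0:ℝ) => g p.1 * ψ p.2)
      unfold sphMeas
      rw [← this]
      simp [mul_comm]
    _ = (∫ x : Sph n, g x ∂sphMeas n) * ∫ r : Set.Ioi (0:ℝ), ψ r ∂(.volumeIoiPow n) :=
      integral_prod_mul (fun x : Sph n => g x) (fun r : Set.Ioi (0:ℝ) => ψ r)
    _ = _ := by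
      congr 1
      simp only [Measure.volumeIoiPow, ENNReal.ofReal]
      rw [integral_withDensity_eq_integral_smul,
        integral_subtype_comap measurableSet_Ioi fun a ↦ Real.toNNReal (a ^ n) • ψ a,
        setIntegral_congr_fun measurableSet_Ioi fun x hx ↦ ?_]
      · simp only [NNReal.smul_def]
        rw [Real.coe_toNNReal _ (pow_nonneg (le_of_lt hx) _)]; rfl
      · exact (measurable_subtype_coe.pow_const _).real_toNNReal

/-- Volume in polar coordinates with a density. -/
lemma polar_region {n : ℕ} (ρ g : Sph n → ℝ) (hρ : Continuous ρ) (hρ0 : ∀ x, 0 < ρ x)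
    (hg : Continuous g) (hg0 : ∀ x, 0 ≤ g x) (G : Eu n → ℝ) (hG : Measurable G)
    (hGg : ∀ (x : Sph n) (r : ℝ), 0 < r → G (r • (x : Eu n)) = g x)
    (D : Set (Eu n)) (hD : MeasurableSet D)
    (hDr : ∀ (x : Sph n) (r : ℝ), 0 < r → (r • (x : Eu n) ∈ D ↔ r ≤ ρ x)) :
    ∫⁻ z in D, ENNReal.ofReal (G z) =
      ENNReal.ofReal ((∫ x, ρ x ^ (n+1) * g x ∂sphMeas n) / (n + 1)) := by
  rw [← lintegral_indicator hD, polar_lintegral _ (Measurable.indicator (by fun_prop) hD)]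
  have : ∀ x : Sph n, (∫⁻ r in Set.Ioi (0:ℝ), ENNReal.ofReal (r ^ n) *
      D.indicator (fun z => ENNReal.ofReal (G z)) (r • (x : Eu n))) =
      ENNReal.ofReal (ρ x ^ (n+1) * g x / (n+1)) := by
    intro x
    have e1 : ∀ r ∈ Set.Ioi (0:ℝ), ENNReal.ofReal (r ^ n) *
      D.indicator (fun z => ENNReal.ofReal (G z)) (r • (x : Eu n)) =
      (Set.Ioc 0 (ρ x)).indicator (fun r => ENNReal.ofReal (r ^ n) * ENNReal.ofReal (g x)) r := by
      intro r hr
      have hr : 0 < r := hr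
      by_cases hc : r ≤ ρ x
      · rw [Set.indicator_of_mem ((hDr x r hr).2 hc), Set.indicator_of_mem (s := Set.Ioc 0 (ρ x)) ⟨hr, hc⟩, hGg x r hr]
      · rw [Set.indicator_of_notMem (fun h => hc ((hDr x r hr).1 h)),
          Set.indicator_of_notMem (s := Set.Ioc 0 (ρ x)) (fun h => hc h.2), mul_zero]
    rw [setLIntegral_congr_fun measurableSet_Ioi e1, setLIntegral_indicator measurableSet_Ioc]
    rw [Set.inter_eq_left.2 (fun r hr => hr.1), lintegral_mul_const' _ _ (by simp)]
    rw [← ofReal_integral_eq_lintegral_ofReal (intervalIntegral.intervalIntegrable_pow n).1,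
      ← intervalIntegral.integral_of_le (hρ0 x).le, ← ENNReal.ofReal_mul]
    · simp; ring_nf
    · rw [intervalIntegral.integral_of_le (hρ0 x).le]
      apply setIntegral_nonneg measurableSet_Ioc
      intro r hr
      exact pow_nonneg hr.1.le _
    · filter_upwards [ae_restrict_mem measurableSet_Ioc] with y hy
      exact pow_nonneg hy.1.le _
  simp only [this]
  rw [← ofReal_integral_eq_lintegral_ofReal]
  · rw [integral_div]
  · exact (Continuous.integrable_of_hasCompactSupport (by fun_prop)
      (HasCompactSupport.of_compactSpace _))
  · refine ae_of_all _ fun x => ?_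
    have := hρ0 x
    have := hg0 x
    simp only [Pi.zero_apply]
    positivity

/-- The star-shaped region with radial function `ρ` relative to the boundary map `X`. -/
def Rad {n : ℕ} (X : Sph n → Eu n) (ρ : Sph n → ℝ) : Set (Eu n) :=
  {z | ∃ (x : Sph n) (r : ℝ), 0 ≤ r ∧ r ≤ ρ x ∧ z = r • X x}

/-- Abstract data for a body given by its boundary map, support function and density. -/
structure RadData {n : ℕ} (X : Sph n → Eu n) (h g : Sph n → ℝ) : Prop where
  contX : Continuous X
  conth : Continuous h
  contg : Continuous g
  g0 : ∀ x, 0 ≤ g x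
  h0 : ∀ x, 0 < h x
  inner_eq : ∀ x : Sph n, ⟪(x : Eu n), X x⟫_ℝ = h x
  surj : ∀ z : Eu n, z ≠ 0 → ∃ (x : Sph n) (s : ℝ), 0 < s ∧ z = s • X x
  vol : ∀ ρ : Sph n → ℝ, Continuous ρ → (∀ x, 0 < ρ x) →
    volume (Rad X ρ) = ENNReal.ofReal ((∫ x, ρ x ^ (n+1) * g x ∂sphMeas n) / (n + 1))

lemma sph_nonempty (n : ℕ) : Nonempty (Sph n) :=
  ⟨⟨EuclideanSpace.single 0 1, by simp⟩⟩

lemma sph_integrable {n : ℕ} {f : Sph n → ℝ} (hf : Continuous f) : Integrable f (sphMeas n) :=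
  hf.integrable_of_hasCompactSupport (HasCompactSupport.of_compactSpace _)

lemma sph_integrable' {n : ℕ} {f : Sph n → Eu n} (hf : Continuous f) : Integrable f (sphMeas n) :=
  hf.integrable_of_hasCompactSupport (HasCompactSupport.of_compactSpace _)

lemma sph_bdd {n : ℕ} {f : Sph n → ℝ} (hf : Continuous f) : ∃ C, 0 ≤ C ∧ ∀ x, |f x| ≤ C := by
  obtain ⟨C, hC⟩ := (isCompact_range (hf.abs)).bddAbove
  obtain ⟨x⟩ := sph_nonempty n
  exact ⟨C, le_trans (abs_nonneg (f x)) (hC ⟨x, rfl⟩), fun x => hC ⟨x, rfl⟩⟩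

lemma Rad_compact {n : ℕ} (X : Sph n → Eu n) (hX : Continuous X) (ρ : Sph n → ℝ)
    (hρ : Continuous ρ) (hρ0 : ∀ x, 0 < ρ x) : IsCompact (Rad X ρ) := by
  have : Rad X ρ = (fun p : ℝ × Sph n => (p.1 * ρ p.2) • X p.2) ''
      (Set.Icc (0:ℝ) 1 ×ˢ Set.univ) := by
    ext z
    constructor
    · rintro ⟨x, r, h0, h1, rfl⟩
      have := hρ0 x
      refine ⟨(r / ρ x, x), ⟨⟨by positivity, (div_le_one this).2 h1⟩, trivial⟩, ?_⟩
      simp only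
      rw [div_mul_cancel₀ _ this.ne']
    · rintro ⟨⟨t, x⟩, ⟨⟨h0, h1⟩, -⟩, rfl⟩
      have := hρ0 x
      simp only at h0 h1
      exact ⟨x, t * ρ x, by positivity, by nlinarith, rfl⟩
  rw [this]
  apply (isCompact_Icc.prod isCompact_univ).image
  fun_prop

lemma binom2 (N : ℕ) : ∃ C : ℝ, 0 ≤ C ∧ ∀ t : ℝ, |t| ≤ 1 →
    |(1 + t) ^ N - 1 - N * t| ≤ C * |t| ^ 2 := by
  induction N with
  | zero => exact ⟨0, le_rfl, fun t _ => by simp⟩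
  | succ N ih =>
    obtain ⟨C, hC, h⟩ := ih
    refine ⟨2 * C + N, by positivity, fun t ht => ?_⟩
    have e : (1 + t) ^ (N+1) - 1 - ((N+1 : ℕ) : ℝ) * t =
      ((1 + t) ^ N - 1 - N * t) * (1 + t) + N * t ^ 2 := by push_cast; ring
    rw [e]
    have h1 : |1 + t| ≤ 2 := by
      rw [abs_le] at ht ⊢; constructor <;> linarith
    calc _ ≤ |((1 + t) ^ N - 1 - N * t) * (1 + t)| + |N * t ^ 2| := abs_add_le _ _
      _ ≤ (C * |t|^2) * 2 + N * |t|^2 := by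
        rw [abs_mul, abs_mul, abs_pow, Nat.abs_cast]
        gcongr
        exact h t ht
      _ = _ := by ring

lemma binom3 (N : ℕ) : ∃ C : ℝ, 0 ≤ C ∧ ∀ t : ℝ, |t| ≤ 1 →
    |(1 + t) ^ N - 1 - N * t - N * (N - 1) / 2 * t ^ 2| ≤ C * |t| ^ 3 := by
  induction N with
  | zero => exact ⟨0, le_rfl, fun t _ => by simp⟩
  | succ N ih =>
    obtain ⟨C, hC, h⟩ := ih
    refine ⟨2 * C + |(N * (N - 1) / 2 : ℝ)|, by positivity, fun t ht => ?_⟩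
    have e : (1 + t) ^ (N+1) - 1 - ((N+1 : ℕ) : ℝ) * t -
      ((N+1 : ℕ) : ℝ) * (((N+1 : ℕ) : ℝ) - 1) / 2 * t ^ 2 =
      ((1 + t) ^ N - 1 - N * t - N * (N - 1) / 2 * t ^ 2) * (1 + t) + (N * (N - 1) / 2) * t ^ 3 := by
      push_cast; ring
    rw [e]
    have h1 : |1 + t| ≤ 2 := by
      rw [abs_le] at ht ⊢; constructor <;> linarith
    calc _ ≤ |((1 + t) ^ N - 1 - N * t - N * (N - 1) / 2 * t ^ 2) * (1 + t)| +
        |(N * (N - 1) / 2) * t ^ 3| := abs_add_le _ _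
      _ ≤ (C * |t|^3) * 2 + |(N * (N - 1) / 2 : ℝ)| * |t|^3 := by
        rw [abs_mul, abs_mul _ (t^3), abs_pow]
        gcongr
        exact h t ht
      _ = _ := by ring

lemma RadData.bm {n : ℕ} {X : Sph n → Eu n} {h g : Sph n → ℝ} (D : RadData X h g)
    (ρ₁ ρ₂ ρ : Sph n → ℝ) (c₁ : Continuous ρ₁) (c₂ : Continuous ρ₂) (c : Continuous ρ)
    (p₁ : ∀ x, 0 < ρ₁ x) (p₂ : ∀ x, 0 < ρ₂ x) (p : ∀ x, 0 < ρ x)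
    (H : ∀ x y₁ y₂ : Sph n, 2⁻¹ * (⟪(x : Eu n), X y₁⟫_ℝ * ρ₁ y₁ + ⟪(x : Eu n), X y₂⟫_ℝ * ρ₂ y₂) ≤
      h x * ρ x) :
    (∫ x, ρ₁ x ^ (n+1) * g x ∂sphMeas n) * (∫ x, ρ₂ x ^ (n+1) * g x ∂sphMeas n) ≤
      (∫ x, ρ x ^ (n+1) * g x ∂sphMeas n) ^ 2 := by
  have key := bm_mult (Rad X ρ₁) (Rad X ρ₂) (Rad X ρ)
    (Rad_compact X D.contX _ c₁ p₁).measurableSet (Rad_compact X D.contX _ c₂ p₂).measurableSet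
    (Rad_compact X D.contX _ c p).measurableSet ?_
  · rw [D.vol _ c₁ p₁, D.vol _ c₂ p₂, D.vol _ c p] at key
    have nn : ∀ ρ : Sph n → ℝ, (∀ x, 0 < ρ x) → 0 ≤ (∫ x, ρ x ^ (n+1) * g x ∂sphMeas n) / (n + 1) := by
      intro ρ hρ
      have : 0 ≤ ∫ x, ρ x ^ (n+1) * g x ∂sphMeas n :=
        integral_nonneg fun x => mul_nonneg (pow_nonneg (hρ x).le _) (D.g0 x)
      positivity
    rw [← ENNReal.ofReal_mul (nn _ p₁), ← ENNReal.ofReal_pow (nn _ p),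
      ENNReal.ofReal_le_ofReal_iff (pow_nonneg (nn _ p) 2), div_mul_div_comm, div_pow,
      ← pow_two ((n:ℝ)+1)] at key
    exact (div_le_div_iff_of_pos_right (by positivity)).1 key
  · have aux : ∀ (x : Sph n) (ρ : Sph n → ℝ), (∀ x, 0 < ρ x) → ∀ a ∈ Rad X ρ, ∃ y : Sph n,
        ⟪(x : Eu n), a⟫_ℝ ≤ ⟪(x : Eu n), X y⟫_ℝ * ρ y := by
      rintro x ρ hρ a ⟨y, r, hr0, hr, rfl⟩
      rw [inner_smul_right]
      rcases le_or_gt 0 ⟪(x : Eu n), X y⟫_ℝ with hc | hc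
      · exact ⟨y, by nlinarith⟩
      · refine ⟨x, ?_⟩
        rw [D.inner_eq]
        nlinarith [D.h0 x, hρ x, mul_pos (D.h0 x) (hρ x)]
    intro a ha b hb
    rcases eq_or_ne ((2:ℝ)⁻¹ • (a + b)) 0 with h0 | h0
    · rw [h0]
      obtain ⟨x⟩ := sph_nonempty n
      exact ⟨x, 0, le_rfl, (p x).le, by simp⟩
    · obtain ⟨x, s, hs, hz⟩ := D.surj _ h0
      refine ⟨x, s, hs.le, ?_, hz⟩
      obtain ⟨y₁, h₁⟩ := aux x ρ₁ p₁ a ha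
      obtain ⟨y₂, h₂⟩ := aux x ρ₂ p₂ b hb
      have e : ⟪(x : Eu n), (2:ℝ)⁻¹ • (a + b)⟫_ℝ = s * h x := by
        rw [hz, inner_smul_right, D.inner_eq]
      rw [inner_smul_right, inner_add_right] at e
      have := H x y₁ y₂
      have h3 : h x * s ≤ h x * ρ x := by linarith
      exact le_of_mul_le_mul_left h3 (D.h0 x)

lemma RadData.poincare {n : ℕ} {X : Sph n → Eu n} {h g : Sph n → ℝ} (D : RadData X h g)
    (f ψ : Sph n → ℝ) (cf : Continuous f) (cψ : Continuous ψ) (hf : ∫ x, f x * g x ∂sphMeas n = 0)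
    (H : ∀ δ > 0, ∃ ε₀ > 0, ∀ ε, 0 < ε → ε < ε₀ → ∀ x y₁ y₂ : Sph n,
      2⁻¹ * (⟪(x : Eu n), X y₁⟫_ℝ * (1 + ε * f y₁) + ⟪(x : Eu n), X y₂⟫_ℝ * (1 - ε * f y₂)) ≤
      h x * (1 + ε ^ 2 * (ψ x + δ))) :
    n * ∫ x, f x ^ 2 * g x ∂sphMeas n ≤ 2 * ∫ x, ψ x * g x ∂sphMeas n := by
  have cg := D.contg
  obtain ⟨V, hV⟩ : ∃ V, V = ∫ x, g x ∂sphMeas n := ⟨_, rfl⟩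
  obtain ⟨a, ha⟩ : ∃ a, a = ∫ x, f x ^ 2 * g x ∂sphMeas n := ⟨_, rfl⟩
  obtain ⟨d, hd⟩ : ∃ a, a = ∫ x, ψ x * g x ∂sphMeas n := ⟨_, rfl⟩
  have hV0 : 0 ≤ V := hV ▸ integral_nonneg D.g0
  rw [← ha, ← hd]
  obtain ⟨F, hF0, hF⟩ := sph_bdd cf
  obtain ⟨P, hP0, hP⟩ := sph_bdd cψ
  obtain ⟨C₂, hC₂, b2⟩ := binom2 (n+1)
  obtain ⟨C₃, hC₃, b3⟩ := binom3 (n+1)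
  have low : ∀ u : Sph n → ℝ, Continuous u → (∀ x, |u x| ≤ F) → (∫ x, u x * g x ∂sphMeas n = 0) →
      (∫ x, u x ^ 2 * g x ∂sphMeas n = a) → ∀ ε, 0 < ε → ε * F ≤ 1 →
      V + ε ^ 2 * ((n + 1) * n / 2 * a) - ε ^ 3 * (C₃ * F ^ 3 * V) ≤
        ∫ x, (1 + ε * u x) ^ (n+1) * g x ∂sphMeas n := by
    intro u cu hu hu0 hu2 ε hε hεF
    have : ∫ x, (g x + ((n+1) * ε) * (u x * g x) + (ε ^ 2 * ((n + 1) * n / 2)) * (u x ^ 2 * g x)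
        - (ε ^ 3 * (C₃ * F ^ 3)) * g x) ∂sphMeas n ≤
        ∫ x, (1 + ε * u x) ^ (n+1) * g x ∂sphMeas n := by
      apply integral_mono (sph_integrable (by fun_prop)) (sph_integrable (by fun_prop))
      intro x
      simp only
      have hux : |ε * u x| ≤ ε * F := by
        rw [abs_mul, abs_of_pos hε]; exact mul_le_mul_of_nonneg_left (hu x) hε.le
      have h3 := b3 (ε * u x) (hux.trans hεF)
      have h4 : |ε * u x| ^ 3 ≤ (ε * F) ^ 3 := by gcongr
      have h5 := (abs_le.1 h3).1
      push_cast at h5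
      have h6 : (1 + ((n:ℝ)+1) * (ε * u x) + (n+1) * n / 2 * (ε * u x)^2 - C₃ * (ε * F) ^ 3) ≤
          (1 + ε * u x) ^ (n+1) := by
        have := mul_le_mul_of_nonneg_left h4 hC₃
        ring_nf at h5 this ⊢
        linarith
      have := mul_le_mul_of_nonneg_right h6 (D.g0 x)
      refine le_trans (le_of_eq ?_) this
      ring
    rw [integral_sub, integral_add, integral_add, integral_const_mul, integral_const_mul,
      integral_const_mul, hu0, hu2, ← hV] at this
    · refine le_trans (le_of_eq ?_) this
      ring
    all_goals exact sph_integrable (by fun_prop)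
  have main : ∀ δ > 0, (n + 1) * n / 2 * a ≤ (n+1) * (d + δ * V) := by
    intro δ hδ
    obtain ⟨ε₀, hε₀, hH⟩ := H δ hδ
    have up : ∀ ε, 0 < ε → ε ^ 2 * (P + δ) ≤ 1 →
        ∫ x, (1 + ε ^ 2 * (ψ x + δ)) ^ (n+1) * g x ∂sphMeas n ≤
        V + ε ^ 2 * ((n+1) * (d + δ * V)) + ε ^ 4 * (C₂ * (P + δ) ^ 2 * V) := by
      intro ε hε h1
      have : ∫ x, (1 + ε ^ 2 * (ψ x + δ)) ^ (n+1) * g x ∂sphMeas n ≤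
          ∫ x, (g x + (ε ^ 2 * (n+1)) * (ψ x * g x) + (ε ^ 2 * (n+1) * δ + ε ^ 4 * (C₂ * (P + δ) ^ 2)) * g x)
          ∂sphMeas n := by
        apply integral_mono (sph_integrable (by fun_prop)) (sph_integrable (by fun_prop))
        intro x
        simp only
        have hux : |ε ^ 2 * (ψ x + δ)| ≤ ε ^ 2 * (P + δ) := by
          rw [abs_mul, abs_of_pos (by positivity : 0 < ε^2)]
          have : |ψ x + δ| ≤ P + δ := (abs_add_le _ _).trans (by rw [abs_of_pos hδ]; linarith [hP x])
          exact mul_le_mul_of_nonneg_left this (by positivity)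
        have h3 := b2 _ (hux.trans h1)
        have h4 : |ε ^ 2 * (ψ x + δ)| ^ 2 ≤ (ε ^ 2 * (P + δ)) ^ 2 := by gcongr
        have h5 := (abs_le.1 h3).2
        push_cast at h5
        have h6 : (1 + ε ^ 2 * (ψ x + δ)) ^ (n+1) ≤
            1 + ((n:ℝ)+1) * (ε ^ 2 * (ψ x + δ)) + C₂ * (ε ^ 2 * (P + δ)) ^ 2 := by
          have := mul_le_mul_of_nonneg_left h4 hC₂
          linarith
        have := mul_le_mul_of_nonneg_right h6 (D.g0 x)
        refine this.trans (le_of_eq ?_)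
        ring
      rw [integral_add, integral_add, integral_const_mul, integral_const_mul, ← hd, ← hV] at this
      · refine this.trans (le_of_eq ?_)
        ring
      all_goals exact sph_integrable (by fun_prop)
    have lim : Filter.Tendsto (fun ε : ℝ => (n+1) * (d + δ * V) + ε * (C₃ * F ^ 3 * V) +
        ε ^ 2 * (C₂ * (P + δ) ^ 2 * V)) (𝓝[>] 0) (𝓝 ((n+1) * (d + δ * V))) := by
      have : Filter.Tendsto (fun ε : ℝ => (n+1) * (d + δ * V) + ε * (C₃ * F ^ 3 * V) +
        ε ^ 2 * (C₂ * (P + δ) ^ 2 * V)) (𝓝 0) (𝓝 ((n+1) * (d + δ * V) + 0 * (C₃ * F ^ 3 * V) +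
        0 ^ 2 * (C₂ * (P + δ) ^ 2 * V))) := by
        apply Continuous.tendsto; fun_prop
      simp only [zero_mul, add_zero, ne_eq, OfNat.ofNat_ne_zero, not_false_eq_true, zero_pow] at this
      exact this.mono_left nhdsWithin_le_nhds
    refine ge_of_tendsto lim ?_
    have s1 : ∀ᶠ ε : ℝ in 𝓝 0, ε * F < 1 := by
      have : Filter.Tendsto (fun ε : ℝ => ε * F) (𝓝 0) (𝓝 (0 * F)) := by
        apply Continuous.tendsto; fun_prop
      rw [zero_mul] at this
      exact this.eventually (gt_mem_nhds one_pos)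
    have s2 : ∀ᶠ ε : ℝ in 𝓝 0, ε ^ 2 * (P + δ) < 1 := by
      have : Filter.Tendsto (fun ε : ℝ => ε ^ 2 * (P + δ)) (𝓝 0) (𝓝 (0 ^ 2 * (P + δ))) := by
        apply Continuous.tendsto; fun_prop
      rw [zero_pow two_ne_zero, zero_mul] at this
      exact this.eventually (gt_mem_nhds one_pos)
    filter_upwards [nhdsWithin_le_nhds s1, nhdsWithin_le_nhds s2,
      nhdsWithin_le_nhds (gt_mem_nhds hε₀), self_mem_nhdsWithin] with ε e1 e2 e3 e4
    have e4 : 0 < ε := e4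
    have bF : ∀ x, |ε * f x| < 1 := fun x => by
      rw [abs_mul, abs_of_pos e4]
      exact lt_of_le_of_lt (mul_le_mul_of_nonneg_left (hF x) e4.le) e1
    have bP : ∀ x, |ε ^ 2 * (ψ x + δ)| < 1 := fun x => by
      rw [abs_mul, abs_of_pos (by positivity : 0 < ε^2)]
      have : |ψ x + δ| ≤ P + δ := (abs_add_le _ _).trans (by rw [abs_of_pos hδ]; linarith [hP x])
      exact lt_of_le_of_lt (mul_le_mul_of_nonneg_left this (by positivity)) e2
    have pC : ∀ x, 0 < 1 + ε ^ 2 * (ψ x + δ) := fun x => by linarith [(abs_lt.1 (bP x)).1]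
    have B := D.bm (fun x => 1 + ε * f x) (fun x => 1 - ε * f x)
      (fun x => 1 + ε ^ 2 * (ψ x + δ)) (by fun_prop) (by fun_prop) (by fun_prop)
      (fun x => by linarith [(abs_lt.1 (bF x)).1]) (fun x => by linarith [(abs_lt.1 (bF x)).2])
      pC (hH ε e4 e3)
    have l1 := low f cf hF hf ha.symm ε e4 e1.le
    have l2 := low (fun x => - f x) (by fun_prop) (by simpa using hF)
      (by simp only [neg_mul, integral_neg, hf, neg_zero]) (by simp only [neg_sq]; exact ha.symm) ε e4 e1.le
    have u := up ε e4 e2.le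
    have pos : 0 ≤ ∫ x, (1 + ε ^ 2 * (ψ x + δ)) ^ (n+1) * g x ∂sphMeas n :=
      integral_nonneg fun x => mul_nonneg (pow_nonneg (pC x).le _) (D.g0 x)
    have e5 : ∀ x, 1 + ε * -f x = 1 - ε * f x := fun x => by ring
    simp only [e5] at l2
    have fin : V + ε ^ 2 * ((n + 1) * n / 2 * a) - ε ^ 3 * (C₃ * F ^ 3 * V) ≤
        ∫ x, (1 + ε ^ 2 * (ψ x + δ)) ^ (n+1) * g x ∂sphMeas n := by
      by_contra hc
      push Not at hc
      nlinarith
    have fin2 : ε ^ 2 * ((n + 1) * n / 2 * a) ≤ ε ^ 2 * ((n+1) * (d + δ * V) + ε * (C₃ * F ^ 3 * V) +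
        ε ^ 2 * (C₂ * (P + δ) ^ 2 * V)) := by
      have := fin.trans u
      ring_nf at this ⊢
      linarith
    exact le_of_mul_le_mul_left fin2 (by positivity)
  have main2 : ∀ δ > 0, n * a ≤ 2 * d + δ * (2 * V) := by
    intro δ hδ
    have := main δ hδ
    have h2 : ((n:ℝ) + 1) * (n * a) ≤ (n + 1) * (2 * d + δ * (2 * V)) := by linarith
    exact le_of_mul_le_mul_left h2 (by positivity)
  have lim : Filter.Tendsto (fun δ : ℝ => 2 * d + δ * (2 * V)) (𝓝[>] 0) (𝓝 (2 * d)) := by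
    have : Filter.Tendsto (fun δ : ℝ => 2 * d + δ * (2 * V)) (𝓝 0) (𝓝 (2 * d + 0 * (2 * V))) := by
      apply Continuous.tendsto; fun_prop
    rw [zero_mul, add_zero] at this
    exact this.mono_left nhdsWithin_le_nhds
  refine ge_of_tendsto lim ?_
  filter_upwards [self_mem_nhdsWithin] with δ hδ
  exact main2 δ hδ

namespace IsSmoothConvexBody
variable {n : ℕ} {K : Set (Eu n)}

lemma nonempty (hK : IsSmoothConvexBody K) : K.Nonempty :=
  hK.interior_nonempty.mono interior_subset

lemma exists_max (hK : IsSmoothConvexBody K) (z : Eu n) : ∃ y ∈ K, ⟪z, y⟫_ℝ = sfn K z := by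
  have hc : IsCompact ((fun y => ⟪z, y⟫_ℝ) '' K) := hK.compact.image (by fun_prop)
  obtain ⟨y, hy, h⟩ := hc.sSup_mem (hK.nonempty.image _)
  exact ⟨y, hy, h⟩

lemma le_sfn (hK : IsSmoothConvexBody K) (z : Eu n) {y : Eu n} (hy : y ∈ K) :
    ⟪z, y⟫_ℝ ≤ sfn K z := by
  have hc : IsCompact ((fun y => ⟪z, y⟫_ℝ) '' K) := hK.compact.image (by fun_prop)
  exact le_csSup hc.bddAbove ⟨y, hy, rfl⟩

lemma sfn_smul (hK : IsSmoothConvexBody K) (z : Eu n) {t : ℝ} (ht : 0 ≤ t) :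
    sfn K (t • z) = t * sfn K z := by
  obtain ⟨y, hy, h⟩ := hK.exists_max z
  obtain ⟨y', hy', h'⟩ := hK.exists_max (t • z)
  have h1 := hK.le_sfn z hy'
  have h2 := hK.le_sfn (t • z) hy
  rw [real_inner_smul_left] at h' h2
  rw [h] at h2
  apply le_antisymm _ h2
  rw [← h']
  exact mul_le_mul_of_nonneg_left h1 ht

lemma contDiffAt (hK : IsSmoothConvexBody K) {z : Eu n} (hz : z ≠ 0) :
    ContDiffAt ℝ (⊤ : ℕ∞) (sfn K) z :=
  hK.smooth.contDiffAt (isOpen_compl_singleton.mem_nhds hz)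

lemma grad_eq' (hK : IsSmoothConvexBody K) {z : Eu n} (hz : z ≠ 0) {y : Eu n} (hy : ∀ w, ⟪w, y⟫_ℝ ≤ sfn K w)
    (h : ⟪z, y⟫_ℝ = sfn K z) : gradient (sfn K) z = y := by
  have hd : DifferentiableAt ℝ (sfn K) z := (hK.contDiffAt hz).differentiableAt (by simp)
  have hm : IsLocalMin (fun w => sfn K w - innerSL ℝ y w) z := by
    refine Filter.Eventually.of_forall fun w => ?_
    have := hy w
    simp only [innerSL_apply_apply]
    have c1 := real_inner_comm y w
    have c2 := real_inner_comm y z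
    linarith
  have h0 := hm.fderiv_eq_zero
  rw [fderiv_fun_sub hd (innerSL ℝ y).differentiableAt, ContinuousLinearMap.fderiv, sub_eq_zero] at h0
  unfold gradient
  rw [h0]
  exact (InnerProductSpace.toDual ℝ (Eu n)).symm_apply_apply y

lemma grad_eq (hK : IsSmoothConvexBody K) {z : Eu n} (hz : z ≠ 0) {y : Eu n} (hy : y ∈ K)
    (h : ⟪z, y⟫_ℝ = sfn K z) : gradient (sfn K) z = y :=
  hK.grad_eq' hz (fun w => hK.le_sfn w hy) h

lemma grad_mem (hK : IsSmoothConvexBody K) {z : Eu n} (hz : z ≠ 0) : gradient (sfn K) z ∈ K := by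
  obtain ⟨y, hy, h⟩ := hK.exists_max z
  rw [hK.grad_eq hz hy h]; exact hy

lemma inner_grad (hK : IsSmoothConvexBody K) {z : Eu n} (hz : z ≠ 0) :
    ⟪z, gradient (sfn K) z⟫_ℝ = sfn K z := by
  obtain ⟨y, hy, h⟩ := hK.exists_max z
  rw [hK.grad_eq hz hy h]; exact h

lemma grad_smul (hK : IsSmoothConvexBody K) {z : Eu n} (hz : z ≠ 0) {t : ℝ} (ht : 0 < t) :
    gradient (sfn K) (t • z) = gradient (sfn K) z := by
  apply hK.grad_eq (smul_ne_zero ht.ne' hz) (hK.grad_mem hz)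
  rw [real_inner_smul_left, hK.inner_grad hz, hK.sfn_smul z ht.le]

lemma grad_contDiffAt (hK : IsSmoothConvexBody K) {z : Eu n} (hz : z ≠ 0) :
    ContDiffAt ℝ (⊤ : ℕ∞) (gradient (sfn K)) z := by
  have h1 : ContDiffAt ℝ (⊤ : ℕ∞) (fderiv ℝ (sfn K)) z :=
    (hK.contDiffAt hz).fderiv_right (m := (⊤ : ℕ∞)) (by simp)
  exact ((InnerProductSpace.toDual ℝ (Eu n)).symm.toContinuousLinearEquiv.contDiff.contDiffAt).comp z h1

lemma hasFDerivAt_grad (hK : IsSmoothConvexBody K) {z : Eu n} (hz : z ≠ 0) :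
    HasFDerivAt (gradient (sfn K)) (hessA K z) z :=
  ((hK.grad_contDiffAt hz).differentiableAt (by simp)).hasFDerivAt

lemma hasGradientAt (hK : IsSmoothConvexBody K) {z : Eu n} (hz : z ≠ 0) :
    HasGradientAt (sfn K) (gradient (sfn K) z) z :=
  ((hK.contDiffAt hz).differentiableAt (by simp)).hasGradientAt

lemma hasFDerivAt (hK : IsSmoothConvexBody K) {z : Eu n} (hz : z ≠ 0) :
    HasFDerivAt (sfn K) (innerSL ℝ (gradient (sfn K) z)) z :=
  (hK.hasGradientAt hz).hasFDerivAt

lemma hess_contDiffAt (hK : IsSmoothConvexBody K) {z : Eu n} (hz : z ≠ 0) :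
    ContDiffAt ℝ (⊤ : ℕ∞) (hessA K) z :=
  (hK.grad_contDiffAt hz).fderiv_right (m := (⊤ : ℕ∞)) (by simp)

lemma hess_self (hK : IsSmoothConvexBody K) {z : Eu n} (hz : z ≠ 0) : hessA K z z = 0 := by
  have h1 : HasDerivAt (fun t : ℝ => t • z) z 1 := by
    simpa using (hasDerivAt_id (1:ℝ)).smul_const z
  have h2 : HasDerivAt (fun t : ℝ => gradient (sfn K) (t • z)) (hessA K z z) 1 := by
    have := hK.hasFDerivAt_grad (z := (1:ℝ) • z) (by simpa using hz)
    have := this.comp_hasDerivAt (1:ℝ) h1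
    simp only [one_smul] at this
    exact this
  have h3 : HasDerivAt (fun t : ℝ => gradient (sfn K) (t • z)) 0 1 := by
    refine (hasDerivAt_const (1:ℝ) (gradient (sfn K) z)).congr_of_eventuallyEq ?_
    filter_upwards [lt_mem_nhds (zero_lt_one (α := ℝ))] with t ht
    exact hK.grad_smul hz ht
  exact h2.unique h3

lemma hess_symm (hK : IsSmoothConvexBody K) {z : Eu n} (hz : z ≠ 0) (v w : Eu n) :
    ⟪hessA K z v, w⟫_ℝ = ⟪v, hessA K z w⟫_ℝ := by
  have hs : IsSymmSndFDerivAt ℝ (sfn K) z := (hK.contDiffAt hz).isSymmSndFDerivAt (by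
    simp only [minSmoothness_of_isRCLikeNormedField]
    exact WithTop.coe_le_coe.2 (le_top : (2 : ℕ∞) ≤ ⊤))
  have hd : DifferentiableAt ℝ (fderiv ℝ (sfn K)) z :=
    ((hK.contDiffAt hz).fderiv_right (m := (⊤ : ℕ∞)) (by simp)).differentiableAt (by simp)
  have e : ∀ v w, ⟪hessA K z v, w⟫_ℝ = fderiv ℝ (fderiv ℝ (sfn K)) z v w := by
    intro v w
    have h1 : HasFDerivAt (fun y => fderiv ℝ (sfn K) y w)
        ((ContinuousLinearMap.apply ℝ ℝ w).comp (fderiv ℝ (fderiv ℝ (sfn K)) z)) z :=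
      (ContinuousLinearMap.apply ℝ ℝ w).hasFDerivAt.comp z hd.hasFDerivAt
    have h2 : HasFDerivAt (fun y => innerSL ℝ w (gradient (sfn K) y))
        ((innerSL ℝ w).comp (hessA K z)) z :=
      (innerSL ℝ w).hasFDerivAt.comp z (hK.hasFDerivAt_grad hz)
    have h3 : (fun y => innerSL ℝ w (gradient (sfn K) y)) = fun y => fderiv ℝ (sfn K) y w := by
      funext y
      rw [innerSL_apply_apply, real_inner_comm]
      exact InnerProductSpace.toDual_symm_apply
    rw [h3] at h2
    have h4 := congrArg (fun L => L v) (h2.unique h1)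
    simp only [ContinuousLinearMap.comp_apply, innerSL_apply_apply,
      ContinuousLinearMap.apply_apply] at h4
    rw [real_inner_comm]; exact h4
  rw [e, real_inner_comm, e]
  exact hs v w

lemma hess_smul (hK : IsSmoothConvexBody K) {z : Eu n} (hz : z ≠ 0) {t : ℝ} (ht : 0 < t) :
    hessA K (t • z) = t⁻¹ • hessA K z := by
  have h1 : HasFDerivAt (fun w : Eu n => t • w) (t • ContinuousLinearMap.id ℝ (Eu n)) z :=
    (hasFDerivAt_id z).const_smul t
  have h2 := (hK.hasFDerivAt_grad (z := t • z) (smul_ne_zero ht.ne' hz)).comp z h1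
  have h3 : HasFDerivAt (gradient (sfn K) ∘ fun w : Eu n => t • w) (hessA K z) z := by
    refine (hK.hasFDerivAt_grad hz).congr_of_eventuallyEq ?_
    filter_upwards [isOpen_compl_singleton.mem_nhds hz] with w hw
    exact hK.grad_smul hw ht
  have := h2.unique h3
  rw [← this]
  ext v
  simp [smul_smul, ht.ne']

end IsSmoothConvexBody

lemma sph_ne {n : ℕ} (x : Sph n) : (x : Eu n) ≠ 0 := by
  have : ‖(x : Eu n)‖ = 1 := by simpa using x.2
  intro h; rw [h] at this; simp at this

lemma sph_norm {n : ℕ} (x : Sph n) : ‖(x : Eu n)‖ = 1 := by simpa using x.2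

lemma sph_inner {n : ℕ} (x : Sph n) : ⟪(x : Eu n), (x : Eu n)⟫_ℝ = 1 := by
  rw [real_inner_self_eq_norm_sq, sph_norm]; norm_num

namespace IsSmoothConvexBody
variable {n : ℕ} {K : Set (Eu n)}

lemma cont_h (hK : IsSmoothConvexBody K) : Continuous fun x : Sph n => sfn K x :=
  continuous_iff_continuousAt.2 fun x =>
    ContinuousAt.comp' (hK.contDiffAt (sph_ne x)).continuousAt continuous_subtype_val.continuousAt

lemma cont_X (hK : IsSmoothConvexBody K) : Continuous fun x : Sph n => gradient (sfn K) (x : Eu n) :=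
  continuous_iff_continuousAt.2 fun x =>
    ContinuousAt.comp' (hK.grad_contDiffAt (sph_ne x)).continuousAt continuous_subtype_val.continuousAt

lemma cont_A (hK : IsSmoothConvexBody K) : Continuous fun x : Sph n => hessA K (x : Eu n) :=
  continuous_iff_continuousAt.2 fun x =>
    ContinuousAt.comp' (hK.hess_contDiffAt (sph_ne x)).continuousAt continuous_subtype_val.continuousAt

lemma cont_rK (hK : IsSmoothConvexBody K) : Continuous fun x : Sph n => rK K (x : Eu n) := by
  have h1 : Continuous fun x : Sph n => hessA K (x : Eu n) + tens (x : Eu n) := by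
    apply hK.cont_A.add
    unfold tens
    fun_prop
  exact ContinuousLinearMap.continuous_det.comp h1

lemma cont_dens (hK : IsSmoothConvexBody K) : Continuous fun x : Sph n => dens K (x : Eu n) :=
  hK.cont_h.mul hK.cont_rK

lemma tens_apply (x v : Eu n) : tens x v = ⟪x, v⟫_ℝ • x := by
  simp [tens]

lemma hess_quad_nonneg (hK : IsSmoothConvexBody K) (x : Sph n) (e : Eu n) :
    0 ≤ ⟪hessA K (x : Eu n) e, e⟫_ℝ := by
  by_contra hc
  push Not at hc
  obtain ⟨v, hv⟩ : ∃ v, v = e - ⟪(x : Eu n), e⟫_ℝ • (x : Eu n) := ⟨_, rfl⟩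
  have hx := hK.hess_self (sph_ne x)
  have e1 : hessA K (x : Eu n) v = hessA K (x : Eu n) e := by
    rw [hv]; simp [hx]
  have e2 : ⟪hessA K (x : Eu n) e, (x : Eu n)⟫_ℝ = 0 := by
    rw [hK.hess_symm (sph_ne x), hx]; simp
  have e3 : ⟪hessA K (x : Eu n) v, v⟫_ℝ = ⟪hessA K (x : Eu n) e, e⟫_ℝ := by
    rw [e1]; rw [hv, inner_sub_right, inner_smul_right, e2]; simp
  have e4 : ⟪(x : Eu n), v⟫_ℝ = 0 := by
    rw [hv, inner_sub_right, inner_smul_right, sph_inner]; simp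
  have hv0 : v ≠ 0 := by
    rintro rfl
    simp at e3
    linarith
  have := hK.posdef x v hv0
  rw [add_apply, tens_apply, e4, inner_add_left, e3] at this
  simp at this
  linarith

lemma rK_pos (hK : IsSmoothConvexBody K) (x : Sph n) : 0 < rK K (x : Eu n) := by
  set P := hessA K (x : Eu n) + tens (x : Eu n) with hP
  let φ : ℝ → ℝ := fun t => ((1 - t) • ContinuousLinearMap.id ℝ (Eu n) + t • P).det
  have hφ : Continuous φ := by
    apply ContinuousLinearMap.continuous_det.comp
    fun_prop
  have hne : ∀ t ∈ Set.Icc (0:ℝ) 1, φ t ≠ 0 := by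
    intro t ht h0
    have : ∃ v, v ≠ 0 ∧ ((1 - t) • ContinuousLinearMap.id ℝ (Eu n) + t • P) v = 0 := by
      have := LinearMap.bot_lt_ker_of_det_eq_zero (f := (((1 - t) • ContinuousLinearMap.id ℝ (Eu n) + t • P : Eu n →L[ℝ] Eu n) : Eu n →ₗ[ℝ] Eu n)) h0
      obtain ⟨v, hv, hv0⟩ := Submodule.exists_mem_ne_zero_of_ne_bot this.ne'
      exact ⟨v, hv0, hv⟩
    obtain ⟨v, hv0, hv⟩ := this
    have h1 := congrArg (fun w => ⟪w, v⟫_ℝ) hv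
    simp only [add_apply, smul_apply, inner_add_left,
      real_inner_smul_left, inner_zero_left, ContinuousLinearMap.id_apply] at h1
    have h2 := hK.posdef x v hv0
    rw [← hP, add_apply] at h2
    have h2' : 0 < ⟪P v, v⟫_ℝ := by
      have := hK.posdef x v hv0
      rwa [← hP] at this
    have h3 : 0 < ⟪v, v⟫_ℝ := real_inner_self_pos.2 hv0
    rcases eq_or_lt_of_le ht.1 with h | h
    · rw [← h] at h1; simp at h1; exact hv0 h1
    · nlinarith [mul_pos h h2', mul_nonneg (sub_nonneg.2 ht.2) h3.le]
  have h0 : φ 0 = 1 := by simp [φ, ContinuousLinearMap.det]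
  have h1 : φ 1 = rK K (x : Eu n) := by simp [φ, rK, ContinuousLinearMap.det, hP]
  by_contra hc
  rw [← h1] at hc
  push Not at hc
  obtain ⟨t, ht, ht0⟩ := intermediate_value_Icc' zero_le_one hφ.continuousOn ⟨hc, by rw [h0]; norm_num⟩
  exact hne t ht ht0

lemma dens_pos (hK : IsSmoothConvexBody K) (x : Sph n) : 0 < dens K (x : Eu n) :=
  mul_pos (hK.pos x) (hK.rK_pos x)

end IsSmoothConvexBody

open Classical in
/-- Radial projection to the sphere. -/
def sp {n : ℕ} (z : Eu n) : Sph n :=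
  if h : z = 0 then Classical.choice (sph_nonempty n) else
    ⟨‖z‖⁻¹ • z, by
      have : ‖z‖ ≠ 0 := norm_ne_zero_iff.2 h
      simp [norm_smul, this]⟩

lemma sp_coe {n : ℕ} {z : Eu n} (hz : z ≠ 0) : (sp z : Eu n) = ‖z‖⁻¹ • z := by
  simp [sp, hz]

lemma norm_smul_sp {n : ℕ} {z : Eu n} (hz : z ≠ 0) : ‖z‖ • (sp z : Eu n) = z := by
  rw [sp_coe hz, smul_smul, mul_inv_cancel₀ (norm_ne_zero_iff.2 hz), one_smul]

lemma sp_smul {n : ℕ} (x : Sph n) {r : ℝ} (hr : 0 < r) : sp (r • (x : Eu n)) = x := by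
  apply Subtype.ext
  rw [sp_coe (smul_ne_zero hr.ne' (sph_ne x)), norm_smul, sph_norm, Real.norm_of_nonneg hr.le,
    mul_one, smul_smul, inv_mul_cancel₀ hr.ne', one_smul]

lemma sp_contOn {n : ℕ} : ContinuousOn (sp : Eu n → Sph n) {0}ᶜ := by
  rw [Topology.IsInducing.subtypeVal.continuousOn_iff]
  have : ContinuousOn (fun z : Eu n => ‖z‖⁻¹ • z) {0}ᶜ := by
    have h1 : ContinuousOn (fun z : Eu n => ‖z‖⁻¹) {0}ᶜ :=
      continuous_norm.continuousOn.inv₀ fun z hz => norm_ne_zero_iff.2 hz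
    exact h1.smul continuousOn_id
  exact this.congr fun z hz => sp_coe hz

lemma sp_meas {n : ℕ} {g : Sph n → ℝ} (hg : Continuous g) : Measurable fun z : Eu n => g (sp z) :=
  measurable_of_continuousOn_compl_singleton 0 (hg.comp_continuousOn sp_contOn)

lemma det_rank_one {n : ℕ} (L : Eu n →L[ℝ] Eu n) (x v : Eu n) (hx : ⟪x, x⟫_ℝ = 1) 
    (hs : ∀ w, ⟪x, L w⟫_ℝ = 0) :
    (L + (innerSL ℝ x).smulRight v).det = ⟪x, v⟫_ℝ * (L + (innerSL ℝ x).smulRight x).det := by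
  have : ((L + (innerSL ℝ x).smulRight v : Eu n →L[ℝ] Eu n) : Eu n →ₗ[ℝ] Eu n) =
      (LinearMap.transvection (innerSL ℝ x : Eu n →ₗ[ℝ] ℝ) (v - x)) *
      ((L + (innerSL ℝ x).smulRight x : Eu n →L[ℝ] Eu n) : Eu n →ₗ[ℝ] Eu n) := by
    apply LinearMap.ext
    intro w
    simp [LinearMap.transvection, hs, inner_add_right, inner_smul_right, hx, smul_sub, -inner_self_eq_norm_sq_to_K]
  unfold ContinuousLinearMap.det
  rw [this, map_mul, LinearMap.transvection.det]
  simp [inner_sub_right, hx, -inner_self_eq_norm_sq_to_K]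

/-- The volume formula for radial regions, from the change of variables formula. -/
lemma vol_of {n : ℕ} (X : Eu n → Eu n) (g : Sph n → ℝ) (hg : Continuous g) (hg0 : ∀ x, 0 ≤ g x)
    (hX : ∀ z, z ≠ 0 → X (‖z‖⁻¹ • z) = X z)
    (A : Eu n → Eu n →L[ℝ] Eu n) (hA : ∀ z, z ≠ 0 → HasFDerivAt (fun z => ‖z‖ • X z) (A z) z)
    (hdet : ∀ z, z ≠ 0 → (A z).det = g (sp z))
    (hinj : ∀ (x x' : Sph n) (r r' : ℝ), 0 < r → 0 < r' → r • X x = r' • X x' → r = r' ∧ x = x')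
    (ρ : Sph n → ℝ) (hρ : Continuous ρ) (hρ0 : ∀ x, 0 < ρ x) :
    volume (Rad (fun x : Sph n => X x) ρ) =
      ENNReal.ofReal ((∫ x, ρ x ^ (n+1) * g x ∂sphMeas n) / (n + 1)) := by
  set D : Set (Eu n) := {z | z ≠ 0 ∧ ‖z‖ ≤ ρ (sp z)} with hD
  have hDm : MeasurableSet D :=
    (measurableSet_singleton (0 : Eu n)).compl.inter (measurableSet_le measurable_norm (sp_meas hρ))
  have h1 := polar_region ρ g hρ hρ0 hg hg0 (fun z => g (sp z)) (sp_meas hg)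
    (fun x r hr => by simp only [sp_smul x hr]) D hDm (by
      intro x r hr
      simp only [hD, Set.mem_ofPred_eq, sp_smul x hr, norm_smul, sph_norm, Real.norm_of_nonneg hr.le,
        mul_one]
      exact ⟨fun h => h.2, fun h => ⟨smul_ne_zero hr.ne' (sph_ne x), h⟩⟩)
  have hXsp : ∀ z : Eu n, z ≠ 0 → X (sp z) = X z := fun z hz => by rw [sp_coe hz, hX z hz]
  have h2 := lintegral_abs_det_fderiv_eq_addHaar_image volume hDm (f := fun z => ‖z‖ • X z) (f' := A)
    (fun z hz => (hA z hz.1).hasFDerivWithinAt) (by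
      intro z hz z' hz' h
      simp only at h
      rw [← hXsp z hz.1, ← hXsp z' hz'.1] at h
      obtain ⟨e1, e2⟩ := hinj _ _ _ _ (norm_pos_iff.2 hz.1) (norm_pos_iff.2 hz'.1) h
      rw [← norm_smul_sp hz.1, ← norm_smul_sp hz'.1, e1, e2])
  have h3 : ∫⁻ z in D, ENNReal.ofReal |(A z).det| = ∫⁻ z in D, ENNReal.ofReal (g (sp z)) := by
    apply setLIntegral_congr_fun hDm
    intro z hz
    simp only
    rw [hdet z hz.1, abs_of_nonneg (hg0 _)]
  rw [h3, h1] at h2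
  rw [h2]
  have h4 : Rad (fun x : Sph n => X x) ρ = ((fun z : Eu n => ‖z‖ • X z) '' D) ∪ {0} := by
    ext z
    constructor
    · rintro ⟨x, r, hr, hrx, rfl⟩
      rcases eq_or_lt_of_le hr with h | h
      · right; simp [← h]
      · left
        refine ⟨r • (x : Eu n), ⟨smul_ne_zero h.ne' (sph_ne x), ?_⟩, ?_⟩
        · rw [sp_smul x h, norm_smul, sph_norm, Real.norm_of_nonneg hr, mul_one]; exact hrx
        · simp only
          rw [← hXsp _ (smul_ne_zero h.ne' (sph_ne x)), sp_smul x h, norm_smul, sph_norm,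
            Real.norm_of_nonneg hr, mul_one]
    · rintro (⟨w, hw, rfl⟩ | h)
      · exact ⟨sp w, ‖w‖, norm_nonneg _, hw.2, by simp only; rw [hXsp w hw.1]⟩
      · rw [Set.mem_singleton_iff] at h
        obtain ⟨x⟩ := sph_nonempty n
        exact ⟨x, 0, le_rfl, (hρ0 x).le, by simp [h]⟩
  rw [h4]
  refine le_antisymm ((measure_union_le _ _).trans (by simp)) (measure_mono Set.subset_union_left)

lemma hasFDerivAt_norm' {n : ℕ} {z : Eu n} (hz : z ≠ 0) :
    HasFDerivAt (fun z : Eu n => ‖z‖) (innerSL ℝ (‖z‖⁻¹ • z)) z := by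
  have h1 : HasFDerivAt (fun z : Eu n => Real.sqrt (‖z‖ ^ 2)) _ z :=
    ((hasStrictFDerivAt_norm_sq z).hasFDerivAt).sqrt (by simpa using hz)
  have e : (fun z : Eu n => Real.sqrt (‖z‖ ^ 2)) = fun z => ‖z‖ := by
    funext z; exact Real.sqrt_sq (norm_nonneg _)
  rw [e] at h1
  have e2 : (1 / (2 * √(‖z‖ ^ 2))) • 2 • innerSL ℝ z = innerSL ℝ (‖z‖⁻¹ • z) := by
    rw [Real.sqrt_sq (norm_nonneg _)]
    have : ‖z‖ ≠ 0 := norm_ne_zero_iff.2 hz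
    apply ContinuousLinearMap.ext
    intro v
    simp only [smul_apply, innerSL_apply_apply, real_inner_smul_left, smul_eq_mul, nsmul_eq_mul]
    field_simp
    norm_num
  rw [e2] at h1
  exact h1

namespace IsSmoothConvexBody
variable {n : ℕ} {K : Set (Eu n)}

lemma surj (hK : IsSmoothConvexBody K) (y : Eu n) (hy : y ≠ 0) :
    ∃ (x : Sph n) (s : ℝ), 0 < s ∧ y = s • gradient (sfn K) (x : Eu n) := by
  have hc : Continuous fun x : Sph n => ⟪(x : Eu n), y⟫_ℝ / sfn K x :=
    Continuous.div (by fun_prop) hK.cont_h fun x => (hK.pos x).ne'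
  have := sph_nonempty n
  obtain ⟨x, -, hx⟩ := isCompact_univ.exists_isMaxOn (s := (Set.univ : Set (Sph n))) Set.univ_nonempty hc.continuousOn
  have hx : ∀ w : Sph n, ⟪(w : Eu n), y⟫_ℝ / sfn K w ≤ ⟪(x : Eu n), y⟫_ℝ / sfn K x :=
    fun w => hx (Set.mem_univ w)
  set s := ⟪(x : Eu n), y⟫_ℝ / sfn K x with hs
  have hs0 : 0 < s := by
    refine lt_of_lt_of_le ?_ (hx (sp y))
    apply div_pos _ (hK.pos _)
    rw [sp_coe hy, real_inner_smul_left, real_inner_self_eq_norm_sq]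
    have := norm_pos_iff.2 hy
    positivity
  refine ⟨x, s, hs0, ?_⟩
  have : gradient (sfn K) (x : Eu n) = s⁻¹ • y := by
    apply hK.grad_eq' (sph_ne x)
    · intro w
      rw [real_inner_smul_right]
      rcases eq_or_ne w 0 with rfl | hw
      · have := hK.sfn_smul (0 : Eu n) (t := 0) le_rfl
        simp at this; simp [this]
      · have h1 := hx (sp w)
        rw [div_le_iff₀ (hK.pos _)] at h1
        have h2 := hK.sfn_smul (sp w : Eu n) (norm_nonneg w)
        rw [norm_smul_sp hw] at h2
        have h3 : ⟪w, y⟫_ℝ = ‖w‖ * ⟪(sp w : Eu n), y⟫_ℝ := by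
          rw [← real_inner_smul_left, norm_smul_sp hw]
        rw [h2, h3, inv_mul_le_iff₀ hs0]
        nlinarith [norm_nonneg w]
    · rw [real_inner_smul_right, hs]
      have h1 := (hK.pos x).ne'
      have h2 : ⟪(x : Eu n), y⟫_ℝ ≠ 0 := by
        intro h; rw [h] at hs; simp at hs; exact hs0.ne' hs
      field_simp
  rw [this, smul_smul, mul_inv_cancel₀ hs0.ne', one_smul]

lemma grad_inj (hK : IsSmoothConvexBody K) (x x' : Sph n)
    (h : gradient (sfn K) (x : Eu n) = gradient (sfn K) (x' : Eu n)) : x = x' := by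
  set p := gradient (sfn K) (x : Eu n) with hp
  have hpK : p ∈ K := hK.grad_mem (sph_ne x)
  have e1 : ⟪(x : Eu n), p⟫_ℝ = sfn K x := hK.inner_grad (sph_ne x)
  have e2 : ⟪(x' : Eu n), p⟫_ℝ = sfn K x' := by rw [h]; exact hK.inner_grad (sph_ne x')
  set v : Eu n := x' - x with hv
  -- the gradient is constant along the segment
  have hseg : ∀ t ∈ Set.Ioo (0:ℝ) 1, (x : Eu n) + t • v ≠ 0 ∧ gradient (sfn K) ((x : Eu n) + t • v) = p := by
    intro t ht
    have e : (x : Eu n) + t • v = (1 - t) • (x : Eu n) + t • (x' : Eu n) := by rw [hv]; module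
    have e3 : ⟪(x : Eu n) + t • v, p⟫_ℝ = (1 - t) * sfn K x + t * sfn K x' := by
      rw [e, inner_add_left, real_inner_smul_left, real_inner_smul_left, e1, e2]
    have hne : (x : Eu n) + t • v ≠ 0 := by
      intro h0
      rw [h0, inner_zero_left] at e3
      nlinarith [mul_pos (sub_pos.2 ht.2) (hK.pos x), mul_pos ht.1 (hK.pos x')]
    refine ⟨hne, hK.grad_eq hne hpK (le_antisymm (hK.le_sfn _ hpK) ?_)⟩
    obtain ⟨y, hy, hy'⟩ := hK.exists_max ((x : Eu n) + t • v)
    rw [← hy', e3, e, inner_add_left, real_inner_smul_left, real_inner_smul_left]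
    have a1 := hK.le_sfn x hy
    have a2 := hK.le_sfn x' hy
    nlinarith [ht.1, ht.2]
  have hA : hessA K (x : Eu n) v = 0 := by
    have h1 : HasDerivAt (fun t : ℝ => (x : Eu n) + t • v) v 0 := by
      simpa using ((hasDerivAt_id (0:ℝ)).smul_const v).const_add (x : Eu n)
    have h2 : HasDerivAt (fun t : ℝ => gradient (sfn K) ((x : Eu n) + t • v)) (hessA K x v) 0 := by
      have := hK.hasFDerivAt_grad (z := (x : Eu n) + (0:ℝ) • v) (by simpa using sph_ne x)
      have := this.comp_hasDerivAt (0:ℝ) h1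
      simp only [zero_smul, add_zero] at this
      exact this
    have h3 : HasDerivWithinAt (fun t : ℝ => gradient (sfn K) ((x : Eu n) + t • v)) 0 (Set.Ioo 0 1) 0 := by
      refine (hasDerivWithinAt_const (0:ℝ) (Set.Ioo 0 1) p).congr (fun t ht => (hseg t ht).2) ?_
      simp [hp]
    have u : UniqueDiffWithinAt ℝ (Set.Ioo (0:ℝ) 1) 0 := by
      apply uniqueDiffWithinAt_convex (convex_Ioo 0 1)
      · simp
      · simp [closure_Ioo]
    exact u.eq_deriv _ h2.hasDerivWithinAt h3
  -- tangential part vanishes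
  set w : Eu n := v - ⟪(x : Eu n), v⟫_ℝ • (x : Eu n) with hw
  have hAw : hessA K (x : Eu n) w = 0 := by
    rw [hw, map_sub, map_smul, hA, hK.hess_self (sph_ne x)]; simp
  have hxw : ⟪(x : Eu n), w⟫_ℝ = 0 := by
    rw [hw, inner_sub_right, inner_smul_right, sph_inner]; simp
  have hw0 : w = 0 := by
    by_contra hne
    have := hK.posdef x w hne
    rw [add_apply, tens_apply, hAw, hxw] at this
    simp at this
  have hx' : (x' : Eu n) = (1 + ⟪(x : Eu n), v⟫_ℝ) • (x : Eu n) := by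
    rw [hw, sub_eq_zero] at hw0
    rw [add_smul, ← hw0, hv]; simp
  set t := 1 + ⟪(x : Eu n), v⟫_ℝ with ht
  have htp : 0 < t := by
    by_contra hneg
    push Not at hneg
    have : ⟪(x' : Eu n), p⟫_ℝ = t * sfn K x := by rw [hx', real_inner_smul_left, e1]
    rw [e2] at this
    nlinarith [hK.pos x, hK.pos x']
  have hn := congrArg norm hx'
  rw [norm_smul, sph_norm, sph_norm, Real.norm_of_nonneg htp.le] at hn
  apply Subtype.ext
  rw [hx', show t = 1 by linarith, one_smul]

lemma cone_inj (hK : IsSmoothConvexBody K) (x x' : Sph n) (r r' : ℝ) (hr : 0 < r) (hr' : 0 < r')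
    (h : r • gradient (sfn K) (x : Eu n) = r' • gradient (sfn K) (x' : Eu n)) : r = r' ∧ x = x' := by
  have key : ∀ (x x' : Sph n) (r r' : ℝ), 0 < r → 0 < r' →
      r • gradient (sfn K) (x : Eu n) = r' • gradient (sfn K) (x' : Eu n) → r ≤ r' := by
    intro x x' r r' hr hr' h
    have h1 := congrArg (fun w => ⟪(x : Eu n), w⟫_ℝ) h
    simp only [real_inner_smul_right] at h1
    rw [hK.inner_grad (sph_ne x)] at h1
    have h2 := hK.le_sfn x (hK.grad_mem (sph_ne x'))
    have h3 := hK.pos x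
    have : r * sfn K x ≤ r' * sfn K x := by rw [h1]; exact mul_le_mul_of_nonneg_left h2 hr'.le
    exact le_of_mul_le_mul_right this h3
  have e := le_antisymm (key x x' r r' hr hr' h) (key x' x r' r hr' hr h.symm)
  refine ⟨e, ?_⟩
  rw [e] at h
  exact hK.grad_inj x x' (smul_right_injective _ hr'.ne' h)

lemma radData (hK : IsSmoothConvexBody K) :
    RadData (fun x : Sph n => gradient (sfn K) (x : Eu n)) (fun x : Sph n => sfn K x)
      (fun x : Sph n => dens K x) where
  contX := hK.cont_X
  conth := hK.cont_h
  contg := hK.cont_dens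
  g0 x := (hK.dens_pos x).le
  h0 x := hK.pos x
  inner_eq x := hK.inner_grad (sph_ne x)
  surj y hy := hK.surj y hy
  vol := by
    intro ρ hρ hρ0
    refine vol_of (gradient (sfn K)) (fun x => dens K x) hK.cont_dens (fun x => (hK.dens_pos x).le)
      (fun z hz => hK.grad_smul hz (inv_pos.2 (norm_pos_iff.2 hz)))
      (fun z => ‖z‖ • hessA K z + (innerSL ℝ (‖z‖⁻¹ • z)).smulRight (gradient (sfn K) z))
      (fun z hz => (hasFDerivAt_norm' hz).smul (hK.hasFDerivAt_grad hz)) ?_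
      (fun x x' r r' hr hr' h => hK.cone_inj x x' r r' hr hr' h) ρ hρ hρ0
    intro z hz
    have hz' := norm_pos_iff.2 hz
    have e1 : hessA K (sp z : Eu n) = ‖z‖ • hessA K z := by
      rw [sp_coe hz, hK.hess_smul hz (inv_pos.2 hz'), inv_inv]
    have e2 : gradient (sfn K) (sp z : Eu n) = gradient (sfn K) z := by
      rw [sp_coe hz, hK.grad_smul hz (inv_pos.2 hz')]
    simp only
    rw [← e1, ← e2, ← sp_coe hz, det_rank_one _ _ _ (sph_inner _),
      hK.inner_grad (sph_ne _)]
    · rfl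
    · intro w
      rw [← hK.hess_symm (sph_ne _), hK.hess_self (sph_ne _), inner_zero_left]

end IsSmoothConvexBody

lemma ball_radData (n : ℕ) : RadData (fun x : Sph n => (x : Eu n)) (fun _ => 1) (fun _ => 1) where
  contX := continuous_subtype_val
  conth := continuous_const
  contg := continuous_const
  g0 _ := zero_le_one
  h0 _ := zero_lt_one
  inner_eq x := sph_inner x
  surj y hy := ⟨sp y, ‖y‖, norm_pos_iff.2 hy, (norm_smul_sp hy).symm⟩
  vol := by
    intro ρ hρ hρ0
    set D : Set (Eu n) := {z | z ≠ 0 ∧ ‖z‖ ≤ ρ (sp z)} with hD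
    have hDm : MeasurableSet D :=
      (measurableSet_singleton (0 : Eu n)).compl.inter (measurableSet_le measurable_norm (sp_meas hρ))
    have h1 := polar_region ρ (fun _ => 1) hρ hρ0 continuous_const (fun _ => zero_le_one)
      (fun z => 1) measurable_const
      (fun x r hr => rfl) D hDm (by
        intro x r hr
        simp only [hD, Set.mem_ofPred_eq, sp_smul x hr, norm_smul, sph_norm, Real.norm_of_nonneg hr.le,
          mul_one]
        exact ⟨fun h => h.2, fun h => ⟨smul_ne_zero hr.ne' (sph_ne x), h⟩⟩)
    rw [← h1]
    simp only [ENNReal.ofReal_one, setLIntegral_one]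
    have h4 : Rad (fun x : Sph n => (x : Eu n)) ρ = D ∪ {0} := by
      ext z
      constructor
      · rintro ⟨x, r, hr, hrx, rfl⟩
        rcases eq_or_lt_of_le hr with h | h
        · right; simp [← h]
        · left
          refine ⟨smul_ne_zero h.ne' (sph_ne x), ?_⟩
          rw [sp_smul x h, norm_smul, sph_norm, Real.norm_of_nonneg hr, mul_one]; exact hrx
      · rintro (h | h)
        · exact ⟨sp z, ‖z‖, norm_nonneg _, h.2, (norm_smul_sp h.1).symm⟩
        · rw [Set.mem_singleton_iff] at h
          obtain ⟨x⟩ := sph_nonempty n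
          exact ⟨x, 0, le_rfl, (hρ0 x).le, by simp [h]⟩
    rw [h4]
    refine le_antisymm ((measure_union_le _ _).trans (by simp)) (measure_mono Set.subset_union_left)

namespace IsSmoothConvexBody
variable {n : ℕ} {K : Set (Eu n)}

lemma hess_unif (hK : IsSmoothConvexBody K) {δ : ℝ} (hδ : 0 < δ) :
    ∃ η > 0, η < 1 ∧ ∀ x : Sph n, ∀ z : Eu n, dist z (x : Eu n) < η →
      ‖hessA K z - hessA K (x : Eu n)‖ ≤ δ := by
  have h := (isCompact_sphere (0 : Eu n) 1).uniformContinuousAt_of_continuousAt (hessA K)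
    (fun x hx => (hK.hess_contDiffAt (sph_ne ⟨x, hx⟩)).continuousAt)
    (Metric.dist_mem_uniformity hδ)
  obtain ⟨η, hη, H⟩ := Metric.mem_uniformity_dist.1 h
  refine ⟨min η 2⁻¹, lt_min hη (by norm_num), (min_le_right _ _).trans_lt (by norm_num), ?_⟩
  intro x z hz
  have h1 := H (a := (x : Eu n)) (b := z) (by rw [dist_comm]; exact hz.trans_le (min_le_left _ _)) x.2
  have h2 : dist (hessA K x) (hessA K z) < δ := h1
  rw [dist_comm, dist_eq_norm] at h2
  exact h2.le

lemma second_diff (hK : IsSmoothConvexBody K) (e : Eu n) {δ : ℝ} (hδ : 0 < δ) :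
    ∃ η₀ > 0, ∀ η, 0 < η → η < η₀ → ∀ x : Sph n,
      sfn K ((x : Eu n) + η • e) + sfn K ((x : Eu n) - η • e) - 2 * sfn K x ≤
        η ^ 2 * (⟪hessA K (x : Eu n) e, e⟫_ℝ + δ) := by
  set δ' := δ / (‖e‖ ^ 2 + 1) with hδ'
  have hδ'0 : 0 < δ' := by positivity
  have hδ'1 : δ' * ‖e‖ ^ 2 ≤ δ := by
    rw [hδ', div_mul_eq_mul_div, div_le_iff₀ (by positivity)]; nlinarith [sq_nonneg ‖e‖]
  obtain ⟨η₁, hη₁, hη₁1, H⟩ := hK.hess_unif hδ'0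
  refine ⟨η₁ / (‖e‖ + 1), by positivity, fun η hη hηlt x => ?_⟩
  rw [lt_div_iff₀ (by positivity)] at hηlt
  have hin : ∀ t : ℝ, |t| ≤ η → (x : Eu n) + t • e ∈ ball (x : Eu n) η₁ := by
    intro t ht
    rw [mem_ball, dist_eq_norm, add_sub_cancel_left, norm_smul, Real.norm_eq_abs]
    nlinarith [mul_le_mul_of_nonneg_right ht (norm_nonneg e)]
  have hne : ∀ z ∈ ball (x : Eu n) η₁, z ≠ 0 := by
    rintro z hz rfl
    rw [mem_ball, dist_comm, dist_zero_right, sph_norm] at hz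
    linarith
  set q := ⟪hessA K (x : Eu n) e, e⟫_ℝ with hq
  have hgrad : ∀ t : ℝ, 0 ≤ t → t ≤ η →
      ⟪gradient (sfn K) ((x : Eu n) + t • e) - gradient (sfn K) ((x : Eu n) - t • e), e⟫_ℝ ≤ 2 * t * (q + δ) := by
    intro t ht0 ht
    have h1 := (convex_ball (x : Eu n) η₁).norm_image_sub_le_of_norm_hasFDerivWithin_le'
      (f := gradient (sfn K)) (f' := hessA K) (φ := hessA K x) (C := δ')
      (fun z hz => (hK.hasFDerivAt_grad (hne z hz)).hasFDerivWithinAt)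
      (fun z hz => H x z hz) (x := (x : Eu n) + (-t) • e) (y := (x : Eu n) + t • e)
      (hin _ (by rw [abs_neg, abs_of_nonneg ht0]; exact ht)) (hin _ (by rw [abs_of_nonneg ht0]; exact ht))
    have e1 : (x : Eu n) + t • e - ((x : Eu n) + (-t) • e) = (2 * t) • e := by module
    have e2 : (x : Eu n) + (-t) • e = (x : Eu n) - t • e := by module
    rw [e1, e2, norm_smul, Real.norm_of_nonneg (by positivity : 0 ≤ 2 * t), map_smul] at h1
    have h2 := real_inner_le_norm (gradient (sfn K) ((x : Eu n) + t • e) - gradient (sfn K) ((x : Eu n) - t • e) - (2 * t) • hessA K x e) e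
    rw [inner_sub_left _ ((2 * t) • _), real_inner_smul_left, ← hq] at h2
    have h3 := mul_le_mul_of_nonneg_right h1 (norm_nonneg e)
    have h4 : δ' * (2 * t * ‖e‖) * ‖e‖ ≤ 2 * t * δ := by
      have := mul_le_mul_of_nonneg_left hδ'1 (by positivity : 0 ≤ 2 * t)
      nlinarith
    linarith
  let u : ℝ → ℝ := fun t => sfn K ((x : Eu n) + t • e) + sfn K ((x : Eu n) - t • e) - t ^ 2 * (q + δ)
  have hu : ∀ t : ℝ, 0 ≤ t → t ≤ η → HasDerivAt u
      (⟪gradient (sfn K) ((x : Eu n) + t • e) - gradient (sfn K) ((x : Eu n) - t • e), e⟫_ℝ - 2 * t * (q + δ)) t := by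
    intro t ht0 ht
    have d1 : HasDerivAt (fun t : ℝ => (x : Eu n) + t • e) e t := by
      simpa using ((hasDerivAt_id t).smul_const e).const_add (x : Eu n)
    have d2 : HasDerivAt (fun t : ℝ => (x : Eu n) - t • e) (-e) t := by
      simpa using ((hasDerivAt_id t).smul_const e).const_sub (x : Eu n)
    have a1 := hin t (by rw [abs_of_nonneg ht0]; exact ht)
    have a2 := hin (-t) (by rw [abs_neg, abs_of_nonneg ht0]; exact ht)
    rw [show (x : Eu n) + (-t) • e = (x : Eu n) - t • e by module] at a2
    have d3 := (hK.hasFDerivAt (hne _ a1)).comp_hasDerivAt t d1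
    have d4 := (hK.hasFDerivAt (hne _ a2)).comp_hasDerivAt t d2
    have d5 := ((hasDerivAt_pow 2 t).mul_const (q + δ))
    have d6 := (d3.add d4).sub d5
    refine (d6.congr_deriv ?_)
    simp only [innerSL_apply_apply, inner_sub_left, inner_neg_right]
    push_cast
    ring
  have hanti : AntitoneOn u (Set.Icc 0 η) := by
    apply antitoneOn_of_deriv_nonpos (convex_Icc 0 η)
    · exact fun t ht => (hu t ht.1 ht.2).continuousAt.continuousWithinAt
    · intro t ht
      rw [interior_Icc] at ht
      exact (hu t ht.1.le ht.2.le).differentiableAt.differentiableWithinAt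
    · intro t ht
      rw [interior_Icc] at ht
      rw [(hu t ht.1.le ht.2.le).deriv]
      linarith [hgrad t ht.1.le ht.2.le]
  have := hanti (Set.left_mem_Icc.2 hη.le) (Set.right_mem_Icc.2 hη.le) hη.le
  simp only [u, zero_smul, add_zero, sub_zero] at this
  linarith

lemma centered (hK : IsSmoothConvexBody K) (e : Eu n) :
    ∫ x : Sph n, (⟪gradient (sfn K) (x : Eu n), e⟫_ℝ - ⟪cK K, e⟫_ℝ) * dens K x ∂sphMeas n = 0 := by
  have cd := hK.cont_dens
  have cX := hK.cont_X
  have hV : 0 < ∫ x : Sph n, dens K x ∂sphMeas n := by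
    have := sph_nonempty n
    refine cd.integral_pos_of_hasCompactSupport_nonneg_nonzero (HasCompactSupport.of_compactSpace _)
      (fun x => (hK.dens_pos x).le) (x := Classical.choice this) (hK.dens_pos _).ne'
  have e1 : ∫ x : Sph n, ⟪gradient (sfn K) (x : Eu n), e⟫_ℝ * dens K x ∂sphMeas n =
      ⟪∫ x : Sph n, dens K x • gradient (sfn K) (x : Eu n) ∂sphMeas n, e⟫_ℝ := by
    rw [real_inner_comm, ← integral_inner (f := fun x : Sph n => dens K x • gradient (sfn K) (x : Eu n)) (sph_integrable' (cd.smul cX))]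
    apply integral_congr_ae
    refine Filter.Eventually.of_forall fun x => ?_
    simp only
    rw [real_inner_smul_right, real_inner_comm, mul_comm]
  simp only [sub_mul]
  rw [integral_sub, e1, integral_const_mul, cK, real_inner_smul_left]
  · field_simp; ring
  · exact sph_integrable (Continuous.mul (by fun_prop) cd)
  · exact sph_integrable (Continuous.mul (by fun_prop) cd)

lemma arith_b1 {s t h ce ε κ η C u : ℝ} (hκ : κ = 1 - C * ε) (hηκ : κ * η = ε * h) (hε : 0 ≤ ε)
    (hκ0 : 0 ≤ κ) (l1 : s ≤ h) (l2 : s + η * t ≤ u) (l3 : -C ≤ t - ce ∧ t - ce ≤ C) :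
    s * (1 + ε * (t - ce)) ≤ h - ε * h * ce + κ * (u - h) := by
  have l4 : κ ≤ 1 + ε * (t - ce) := by
    have := mul_le_mul_of_nonneg_left l3.1 hε
    rw [hκ]; linarith
  have l5 := mul_le_mul_of_nonneg_right l4 (sub_nonneg.2 l1)
  have l6 := mul_le_mul_of_nonneg_left l2 hκ0
  have l7 : κ * (s + η * t) = κ * s + ε * h * t := by rw [← hηκ]; ring
  rw [l7] at l6
  linarith

lemma arith_b2 {s t h ce ε κ η C u : ℝ} (hκ : κ = 1 - C * ε) (hηκ : κ * η = ε * h) (hε : 0 ≤ ε)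
    (hκ0 : 0 ≤ κ) (l1 : s ≤ h) (l2 : s - η * t ≤ u) (l3 : -C ≤ t - ce ∧ t - ce ≤ C) :
    s * (1 - ε * (t - ce)) ≤ h + ε * h * ce + κ * (u - h) := by
  have := arith_b1 (s := s) (t := -t) (h := h) (ce := -ce) (u := u) hκ hηκ hε hκ0 l1
    (by linarith) ⟨by linarith [l3.2], by linarith [l3.1]⟩
  linarith

lemma arith_b3 {h q N Q C ε κ η δ δ' R : ℝ} (hC0 : 0 ≤ C) (hN0 : 0 ≤ N) (hδ : 0 < δ) (hε : 0 < ε)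
    (hx : 0 < h) (hxN : h ≤ N) (hq0 : 0 ≤ q) (hqQ : q ≤ Q) (hκ : κ = 1 - C * ε) (hκ0 : 0 < κ)
    (hη : η = ε * h / κ) (hδ' : δ' = δ / (N + 1)) (hR : R = 2⁻¹ * (N * Q) + δ) (hR0 : 0 < R)
    (a3 : ε * (2 * (C + 1) * R) < δ) :
    κ * (η ^ 2 * (q + δ')) ≤ 2 * h * (ε ^ 2 * (2⁻¹ * (h * q) + δ)) := by
  have m1 : h * δ' ≤ δ := by
    rw [hδ', mul_div_assoc', div_le_iff₀ (by positivity)]; nlinarith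
  have m2 : h * q ≤ N * Q := mul_le_mul hxN hqQ hq0 hN0
  have m3 : C * ε * (2⁻¹ * (h * q) + δ) ≤ 2⁻¹ * δ := by
    have : C * ε * (2⁻¹ * (h * q) + δ) ≤ C * ε * R := by
      apply mul_le_mul_of_nonneg_left _ (by positivity); rw [hR]; linarith
    nlinarith [mul_pos hε hR0]
  have m4 : 2⁻¹ * (h * (q + δ')) ≤ κ * (2⁻¹ * (h * q) + δ) := by
    rw [hκ]; nlinarith
  have m5 : κ * (η ^ 2 * (q + δ')) = (ε ^ 2 * h / κ) * (h * (q + δ')) := by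
    rw [hη]; field_simp
  rw [m5, div_mul_eq_mul_div, div_le_iff₀ hκ0]
  have m6 := mul_le_mul_of_nonneg_left m4 (by positivity : 0 ≤ 2 * ε ^ 2 * h)
  nlinarith

lemma I1_dir (hK : IsSmoothConvexBody K) (e : Eu n) :
    n * ∫ x : Sph n, (⟪gradient (sfn K) (x : Eu n), e⟫_ℝ - ⟪cK K, e⟫_ℝ) ^ 2 * dens K x ∂sphMeas n ≤
      ∫ x : Sph n, (sfn K x * ⟪hessA K (x : Eu n) e, e⟫_ℝ) * dens K x ∂sphMeas n := by
  have cX := hK.cont_X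
  have cA := hK.cont_A
  have ch := hK.cont_h
  have cq : Continuous fun x : Sph n => ⟪hessA K (x : Eu n) e, e⟫_ℝ := by fun_prop
  have cf : Continuous fun x : Sph n => ⟪gradient (sfn K) (x : Eu n), e⟫_ℝ - ⟪cK K, e⟫_ℝ := by fun_prop
  have h0 := hK.radData.poincare (fun x : Sph n => ⟪gradient (sfn K) (x : Eu n), e⟫_ℝ - ⟪cK K, e⟫_ℝ)
    (fun x : Sph n => 2⁻¹ * (sfn K x * ⟪hessA K (x : Eu n) e, e⟫_ℝ)) cf (by fun_prop) (hK.centered e) ?_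
  · have e1 : 2 * ∫ x : Sph n, 2⁻¹ * (sfn K x * ⟪hessA K (x : Eu n) e, e⟫_ℝ) * dens K x ∂sphMeas n =
        ∫ x : Sph n, (sfn K x * ⟪hessA K (x : Eu n) e, e⟫_ℝ) * dens K x ∂sphMeas n := by
      simp only [mul_assoc]
      rw [integral_const_mul]; ring
    rw [e1] at h0
    exact h0
  intro δ hδ
  obtain ⟨C, hC0, hC⟩ := sph_bdd cf
  obtain ⟨Q, hQ0, hQ⟩ := sph_bdd cq
  obtain ⟨N, hN0, hN⟩ := sph_bdd ch
  set ce := ⟪cK K, e⟫_ℝ with hce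
  set δ' := δ / (N + 1) with hδ'
  have hδ'0 : 0 < δ' := by positivity
  obtain ⟨η₀, hη₀, H⟩ := hK.second_diff e hδ'0
  set R := 2⁻¹ * (N * Q) + δ with hR
  have hR0 : 0 < R := by positivity
  refine ⟨min (1 / (2 * (C + 1))) (min (η₀ / (2 * (N + 1))) (δ / (2 * (C + 1) * R))),
    by positivity, fun ε hε hεlt x y₁ y₂ => ?_⟩
  rw [lt_min_iff, lt_min_iff, lt_div_iff₀ (by positivity), lt_div_iff₀ (by positivity),
    lt_div_iff₀ (by positivity)] at hεlt
  obtain ⟨a1, a2, a3⟩ := hεlt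
  set κ := 1 - C * ε with hκ
  have hκ2 : 2⁻¹ ≤ κ := by rw [hκ]; nlinarith
  have hκ0 : 0 < κ := by linarith
  have hx := hK.pos x
  have hxN : sfn K x ≤ N := (le_abs_self _).trans (hN x)
  set h := sfn K x with hh
  set η := ε * h / κ with hη
  have hη0 : 0 < η := by positivity
  have hηκ : κ * η = ε * h := by rw [hη]; field_simp
  have hηlt : η < η₀ := by
    rw [hη, div_lt_iff₀ hκ0]
    nlinarith [mul_le_mul_of_nonneg_left hxN hε.le]
  have hSD := H η hη0 hηlt x
  set q := ⟪hessA K (x : Eu n) e, e⟫_ℝ with hq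
  have hq0 : 0 ≤ q := hK.hess_quad_nonneg x e
  have hqQ : q ≤ Q := (le_abs_self _).trans (hQ x)
  have b1 : ⟪(x : Eu n), gradient (sfn K) (y₁ : Eu n)⟫_ℝ * (1 + ε * (⟪gradient (sfn K) (y₁ : Eu n), e⟫_ℝ - ce)) ≤
      h - ε * h * ce + κ * (sfn K ((x : Eu n) + η • e) - h) := by
    have p := hK.grad_mem (sph_ne y₁)
    have l1 := hK.le_sfn x p
    have l2 := hK.le_sfn ((x : Eu n) + η • e) p
    rw [inner_add_left, real_inner_smul_left, real_inner_comm _ e] at l2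
    have l3 := abs_le.1 (hC y₁)
    exact arith_b1 hκ hηκ hε.le hκ0.le l1 l2 l3
  have b2 : ⟪(x : Eu n), gradient (sfn K) (y₂ : Eu n)⟫_ℝ * (1 - ε * (⟪gradient (sfn K) (y₂ : Eu n), e⟫_ℝ - ce)) ≤
      h + ε * h * ce + κ * (sfn K ((x : Eu n) - η • e) - h) := by
    have p := hK.grad_mem (sph_ne y₂)
    have l1 := hK.le_sfn x p
    have l2 := hK.le_sfn ((x : Eu n) - η • e) p
    rw [inner_sub_left, real_inner_smul_left, real_inner_comm _ e] at l2
    have l3 := abs_le.1 (hC y₂)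
    exact arith_b2 hκ hηκ hε.le hκ0.le l1 l2 l3
  have b3 : κ * (η ^ 2 * (q + δ')) ≤ 2 * h * (ε ^ 2 * (2⁻¹ * (h * q) + δ)) := by
    exact arith_b3 hC0 hN0 hδ hε hx hxN hq0 hqQ hκ hκ0 hη hδ' hR hR0 a3
  have b4 := mul_le_mul_of_nonneg_left hSD hκ0.le
  linarith

/-- The Laplacian of the support function, as a sum over the standard basis. -/
def trA (K : Set (Eu n)) (x : Eu n) : ℝ :=
  ∑ i, ⟪hessA K x (EuclideanSpace.single i 1), EuclideanSpace.single i 1⟫_ℝ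

lemma sum_inner_sq (v : Eu n) : ∑ i, ⟪v, EuclideanSpace.single i (1:ℝ)⟫_ℝ ^ 2 = ‖v‖ ^ 2 := by
  rw [EuclideanSpace.norm_sq_eq]
  apply Finset.sum_congr rfl
  intro i _
  simp [EuclideanSpace.inner_single_right]

lemma cont_trA (hK : IsSmoothConvexBody K) : Continuous fun x : Sph n => trA K (x : Eu n) := by
  have cA := hK.cont_A
  unfold trA
  fun_prop

lemma I1 (hK : IsSmoothConvexBody K) :
    n * ∫ x : Sph n, ‖gradient (sfn K) (x : Eu n) - cK K‖ ^ 2 * dens K x ∂sphMeas n ≤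
      ∫ x : Sph n, (sfn K x * trA K x) * dens K x ∂sphMeas n := by
  have cX := hK.cont_X
  have cA := hK.cont_A
  have ch := hK.cont_h
  have cd := hK.cont_dens
  have h1 := Finset.sum_le_sum (s := Finset.univ) fun i (_ : i ∈ (Finset.univ : Finset (Fin (n+1)))) =>
    hK.I1_dir (EuclideanSpace.single i 1)
  rw [← Finset.mul_sum, ← integral_finsetSum, ← integral_finsetSum] at h1
  · have e1 : ∀ x : Sph n, ‖gradient (sfn K) (x : Eu n) - cK K‖ ^ 2 * dens K x =
        ∑ i, (⟪gradient (sfn K) (x : Eu n), EuclideanSpace.single i 1⟫_ℝ -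
          ⟪cK K, EuclideanSpace.single i 1⟫_ℝ) ^ 2 * dens K x := by
      intro x
      rw [← sum_inner_sq, Finset.sum_mul]
      simp only [inner_sub_left]
    have e2 : ∀ x : Sph n, (sfn K x * trA K x) * dens K x =
        ∑ i, sfn K x * ⟪hessA K (x : Eu n) (EuclideanSpace.single i 1),
          EuclideanSpace.single i 1⟫_ℝ * dens K x := by
      intro x
      rw [trA, Finset.mul_sum, Finset.sum_mul]
    simp only [e1, e2]
    exact h1
  · intro i _
    exact sph_integrable (by fun_prop)
  · intro i _
    exact sph_integrable (by fun_prop)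

end IsSmoothConvexBody

lemma arith_c {ε f fy w d r F L T κ : ℝ} (hε : 0 ≤ ε) (hκ : κ = 1 - ε * (F + 2 * L)) (hκ0 : 0 < κ)
    (hf : -F ≤ fy) (hw : w ≤ T * d) (hr : r ≤ L * d ^ 2) (e : fy = f + w + r) :
    (1 - d ^ 2 / 2) * (1 + ε * fy) ≤ 1 + ε * f + ε ^ 2 * T ^ 2 / (2 * κ) := by
  have h1 : (1 - d ^ 2 / 2) * (1 + ε * fy) ≤ 1 + ε * f + ε * T * d - d ^ 2 / 2 * κ := by
    have a1 := mul_le_mul_of_nonneg_left hw hε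
    have a2 := mul_le_mul_of_nonneg_left hr hε
    have a3 := mul_le_mul_of_nonneg_left hf (mul_nonneg hε (by positivity : 0 ≤ d ^ 2 / 2))
    have a4 : (1 - d ^ 2 / 2) * (1 + ε * fy) = 1 + ε * fy - d ^ 2 / 2 - ε * (d ^ 2 / 2) * fy := by ring
    have a5 : ε * fy = ε * f + ε * w + ε * r := by rw [e]; ring
    rw [a4, a5, hκ]
    nlinarith
  have h2 : ε * T * d - d ^ 2 / 2 * κ ≤ ε ^ 2 * T ^ 2 / (2 * κ) := by
    rw [le_div_iff₀ (by positivity)]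
    nlinarith [sq_nonneg (ε * T - d * κ)]
  linarith

namespace IsSmoothConvexBody
variable {n : ℕ} {K : Set (Eu n)}

lemma grad_lip (hK : IsSmoothConvexBody K) : ∃ L : ℝ, 0 ≤ L ∧ ∀ x y : Sph n,
    ‖gradient (sfn K) (y : Eu n) - gradient (sfn K) (x : Eu n)‖ ≤ L * ‖(y : Eu n) - x‖ := by
  have h : LocallyLipschitzOn (sphere (0 : Eu n) 1) (gradient (sfn K)) := by
    intro x hx
    have h1 : ContDiffAt ℝ 1 (gradient (sfn K)) x :=
      (hK.grad_contDiffAt (sph_ne ⟨x, hx⟩)).of_le (by exact WithTop.coe_le_coe.2 (le_top : (1 : ℕ∞) ≤ ⊤))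
    obtain ⟨C, t, ht, H⟩ := h1.exists_lipschitzOnWith
    exact ⟨C, t, mem_nhdsWithin_of_mem_nhds ht, H⟩
  obtain ⟨C, hC⟩ := h.exists_lipschitzOnWith_of_compact (isCompact_sphere (0 : Eu n) 1)
  refine ⟨C, C.2, fun x y => ?_⟩
  have := hC.dist_le_mul y y.2 x x.2
  rwa [dist_eq_norm, dist_eq_norm] at this

lemma inner_tgrad (hK : IsSmoothConvexBody K) (x : Sph n) :
    ⟪(x : Eu n), gradient (sfn K) (x : Eu n) - cK K⟫_ℝ = tsfn K x := by
  rw [inner_sub_right, hK.inner_grad (sph_ne x), tsfn]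

lemma cont_t (hK : IsSmoothConvexBody K) : Continuous fun x : Sph n => tsfn K x := by
  have := hK.cont_h
  unfold tsfn
  fun_prop

lemma I3 (hK : IsSmoothConvexBody K) (a : ℝ) (ha : ∫ x : Sph n, (tsfn K x - a) ∂sphMeas n = 0) :
    n * ∫ x : Sph n, (tsfn K x - a) ^ 2 ∂sphMeas n ≤
      ∫ x : Sph n, (‖gradient (sfn K) (x : Eu n) - cK K‖ ^ 2 - tsfn K x ^ 2) ∂sphMeas n := by
  have cX := hK.cont_X
  have ct := hK.cont_t
  have cf : Continuous fun x : Sph n => tsfn K x - a := by fun_prop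
  have cψ : Continuous fun x : Sph n => ‖gradient (sfn K) (x : Eu n) - cK K‖ ^ 2 - tsfn K x ^ 2 := by
    fun_prop
  have h0 := (ball_radData n).poincare (fun x : Sph n => tsfn K x - a)
    (fun x : Sph n => 2⁻¹ * (‖gradient (sfn K) (x : Eu n) - cK K‖ ^ 2 - tsfn K x ^ 2)) cf (by fun_prop)
    (by simpa using ha) ?_
  · simp only [mul_one] at h0
    rw [integral_const_mul] at h0
    linarith
  intro δ hδ
  obtain ⟨F, hF0, hF⟩ := sph_bdd cf
  obtain ⟨W, hW0, hW⟩ := sph_bdd ct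
  obtain ⟨P, hP0, hP⟩ := sph_bdd cψ
  obtain ⟨L, hL0, hL⟩ := hK.grad_lip
  obtain ⟨L', hL'⟩ : ∃ L', L' = L + W / 2 := ⟨_, rfl⟩
  have hL'0 : 0 ≤ L' := by rw [hL']; positivity
  obtain ⟨S, hS⟩ : ∃ S, S = F + 2 * L' + 1 := ⟨_, rfl⟩
  have hS0 : 0 < S := by rw [hS]; positivity
  refine ⟨min (1 / S) (δ / (S * (P / 2 + δ))), by positivity, fun ε hε hεlt x y₁ y₂ => ?_⟩
  rw [lt_min_iff, lt_div_iff₀ hS0, lt_div_iff₀ (by positivity)] at hεlt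
  obtain ⟨a1, a2⟩ := hεlt
  obtain ⟨κ, hκ⟩ : ∃ κ, κ = 1 - ε * (F + 2 * L') := ⟨_, rfl⟩
  have hκ0 : 0 < κ := by rw [hκ]; rw [hS] at a1; nlinarith
  obtain ⟨T, hT⟩ : ∃ T, T = gradient (sfn K) (x : Eu n) - cK K - tsfn K x • (x : Eu n) := ⟨_, rfl⟩
  have hT2 : ‖T‖ ^ 2 = ‖gradient (sfn K) (x : Eu n) - cK K‖ ^ 2 - tsfn K x ^ 2 := by
    rw [hT, norm_sub_sq_real, real_inner_smul_right, real_inner_comm, hK.inner_tgrad, norm_smul,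
      sph_norm, Real.norm_eq_abs, mul_one, sq_abs]
    ring
  have key : ∀ y : Sph n, ∃ r, |r| ≤ L' * ‖(y : Eu n) - x‖ ^ 2 ∧
      tsfn K y - a = tsfn K x - a + ⟪T, (y : Eu n) - x⟫_ℝ + r := by
    intro y
    obtain ⟨d, hd⟩ : ∃ d, d = ‖(y : Eu n) - x‖ := ⟨_, rfl⟩
    have i1 : ⟪(x : Eu n), (y : Eu n) - x⟫_ℝ = - (d ^ 2 / 2) := by
      have := norm_add_sq_real (x : Eu n) ((y : Eu n) - x)
      rw [add_sub_cancel, sph_norm, sph_norm, ← hd] at this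
      linarith
    obtain ⟨r, hr⟩ : ∃ r, r = sfn K y - ⟪(y : Eu n), gradient (sfn K) (x : Eu n)⟫_ℝ := ⟨_, rfl⟩
    have r0 : 0 ≤ r := by
      rw [hr]; linarith [hK.le_sfn (y : Eu n) (hK.grad_mem (sph_ne x))]
    have r1 : r ≤ L * d ^ 2 := by
      have j1 := hK.inner_grad (sph_ne y)
      have j2 := hK.inner_grad (sph_ne x)
      have j3 := hK.le_sfn (x : Eu n) (hK.grad_mem (sph_ne y))
      have j4 := real_inner_le_norm ((y : Eu n) - x) (gradient (sfn K) (y : Eu n) - gradient (sfn K) (x : Eu n))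
      rw [inner_sub_left, inner_sub_right, inner_sub_right, j1, j2, ← hd] at j4
      have j5 := mul_le_mul_of_nonneg_left (hL x y) (norm_nonneg ((y : Eu n) - x))
      rw [← hd] at j5
      rw [hr]
      nlinarith
    refine ⟨r - tsfn K x * (d ^ 2 / 2), ?_, ?_⟩
    · rw [← hd]
      have w := abs_le.1 (hW x)
      rw [hL', abs_le]
      constructor <;> nlinarith [sq_nonneg d, mul_le_mul_of_nonneg_right w.1 (sq_nonneg d),
        mul_le_mul_of_nonneg_right w.2 (sq_nonneg d)]
    · have j2 := hK.inner_grad (sph_ne x)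
      rw [hT, inner_sub_left, real_inner_smul_left, i1, hr, inner_sub_left, inner_sub_right,
        inner_sub_right, real_inner_comm (y : Eu n), real_inner_comm (x : Eu n), j2,
        real_inner_comm (y : Eu n), real_inner_comm (x : Eu n)]
      unfold tsfn
      ring
  have hxy : ∀ y : Sph n, ⟪(x : Eu n), (y : Eu n)⟫_ℝ = 1 - ‖(y : Eu n) - x‖ ^ 2 / 2 := by
    intro y
    have := norm_sub_sq_real (y : Eu n) (x : Eu n)
    rw [sph_norm, sph_norm, real_inner_comm] at this
    linarith
  have b1 : ⟪(x : Eu n), (y₁ : Eu n)⟫_ℝ * (1 + ε * (tsfn K y₁ - a)) ≤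
      1 + ε * (tsfn K x - a) + ε ^ 2 * ‖T‖ ^ 2 / (2 * κ) := by
    obtain ⟨r, hr, e⟩ := key y₁
    rw [hxy]
    exact arith_c hε.le hκ hκ0 (abs_le.1 (hF y₁)).1 (real_inner_le_norm _ _) (abs_le.1 hr).2 e
  have b2 : ⟪(x : Eu n), (y₂ : Eu n)⟫_ℝ * (1 - ε * (tsfn K y₂ - a)) ≤
      1 - ε * (tsfn K x - a) + ε ^ 2 * ‖T‖ ^ 2 / (2 * κ) := by
    obtain ⟨r, hr, e⟩ := key y₂
    rw [hxy]
    have h1 := real_inner_le_norm (-T) ((y₂ : Eu n) - x)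
    rw [inner_neg_left, norm_neg] at h1
    have := arith_c (fy := -(tsfn K y₂ - a)) (f := -(tsfn K x - a)) (r := -r) hε.le hκ hκ0
      (by linarith [(abs_le.1 (hF y₂)).2]) h1 (by linarith [(abs_le.1 hr).1]) (by rw [e]; ring)
    linarith
  have b3 : ε ^ 2 * ‖T‖ ^ 2 / (2 * κ) ≤ ε ^ 2 * (2⁻¹ * ‖T‖ ^ 2 + δ) := by
    rw [mul_div_assoc]
    apply mul_le_mul_of_nonneg_left _ (by positivity)
    rw [div_le_iff₀ (by positivity), hκ]
    have hp : ‖T‖ ^ 2 ≤ P := by rw [hT2]; exact (le_abs_self _).trans (hP x)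
    have m1 : ε * (F + 2 * L') * (2⁻¹ * ‖T‖ ^ 2 + δ) ≤ δ := by
      calc ε * (F + 2 * L') * (2⁻¹ * ‖T‖ ^ 2 + δ) ≤ ε * S * (P / 2 + δ) := by
            apply mul_le_mul
            · apply mul_le_mul_of_nonneg_left _ hε.le; rw [hS]; linarith
            · linarith
            · positivity
            · positivity
        _ ≤ δ := by linarith
    linarith
  simp only [← hT2]
  linarith

end IsSmoothConvexBody

lemma integrable_cut {n : ℕ} {φ : ℝ → ℝ} (hφ : Continuous φ) (h1 : ∀ r < 1, φ r = 0)
    (h3 : ∀ r, 3 < r → φ r = 0) {G : Eu n → ℝ} (hG : ContinuousOn G {0}ᶜ) :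
    Integrable fun z : Eu n => φ ‖z‖ * G z := by
  have hc : Continuous fun z : Eu n => φ ‖z‖ * G z := by
    rw [continuous_iff_continuousAt]
    intro z
    rcases eq_or_ne z 0 with rfl | hz
    · have : (fun z : Eu n => φ ‖z‖ * G z) =ᶠ[𝓝 0] fun _ => 0 := by
        filter_upwards [ball_mem_nhds (0 : Eu n) one_pos] with w hw
        rw [h1 _ (by simpa using hw), zero_mul]
      exact (continuousAt_const (y := (0:ℝ))).congr this.symm
    · exact (hφ.comp continuous_norm).continuousAt.mul
        (hG.continuousAt (isOpen_compl_singleton.mem_nhds hz))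
  refine hc.integrable_of_hasCompactSupport ?_
  refine HasCompactSupport.intro (isCompact_closedBall (0 : Eu n) 3) fun z hz => ?_
  rw [h3 _ (by simpa using hz), zero_mul]

lemma contOn_smulRight {n : ℕ} {f : Eu n → Eu n →L[ℝ] ℝ} {g : Eu n → Eu n} {s : Set (Eu n)}
    (hf : ContinuousOn f s) (hg : ContinuousOn g s) :
    ContinuousOn (fun z => (f z).smulRight (g z)) s := by
  have : ContinuousOn (fun z => ContinuousLinearMap.smulRightL ℝ (Eu n) (Eu n) (f z) (g z)) s := by
    fun_prop
  exact this

/-- Divergence identity on the sphere for 1-homogeneous vector fields. -/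
lemma sph_div {n : ℕ} (W : Eu n → Eu n) (D : Eu n → Eu n →L[ℝ] Eu n)
    (hD : ∀ z, z ≠ 0 → HasFDerivAt W (D z) z) (hDc : ContinuousOn D {0}ᶜ)
    (hW : ∀ z, z ≠ 0 → ∀ r : ℝ, 0 < r → W (r • z) = r • W z)
    (hDh : ∀ z, z ≠ 0 → ∀ r : ℝ, 0 < r → D (r • z) = D z) :
    ∫ x : Sph n, ∑ i, ⟪D (x : Eu n) (EuclideanSpace.single i 1), EuclideanSpace.single i 1⟫_ℝ ∂sphMeas n =
      (n + 1) * ∫ x : Sph n, ⟪(x : Eu n), W x⟫_ℝ ∂sphMeas n := by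
  let B : ContDiffBump (2:ℝ) := ⟨1/2, 1, by norm_num, by norm_num⟩
  obtain ⟨ψ, hψ⟩ : ∃ ψ : ℝ → ℝ, ψ = B := ⟨_, rfl⟩
  have cψ : ContDiff ℝ 1 ψ := hψ ▸ B.contDiff
  have ψ1 : ∀ r < 1, ψ r = 0 := by
    intro r hr
    rw [hψ]
    apply B.zero_of_le_dist
    rw [Real.dist_eq, abs_sub_comm, abs_of_nonneg (by linarith)]
    show (1:ℝ) ≤ _
    linarith
  have ψ3 : ∀ r, 3 < r → ψ r = 0 := by
    intro r hr
    rw [hψ]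
    apply B.zero_of_le_dist
    rw [Real.dist_eq, abs_of_nonneg (by linarith)]
    show (1:ℝ) ≤ _
    linarith
  have hcs : HasCompactSupport ψ := hψ ▸ B.hasCompactSupport
  have cψ' : Continuous (deriv ψ) := cψ.continuous_deriv le_rfl
  have dψ1 : ∀ r < 1, deriv ψ r = 0 := by
    intro r hr
    have : ψ =ᶠ[𝓝 r] fun _ => 0 := by
      filter_upwards [gt_mem_nhds hr] with s hs using ψ1 s hs
    rw [this.deriv_eq]; simp
  have dψ3 : ∀ r, 3 < r → deriv ψ r = 0 := by
    intro r hr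
    have : ψ =ᶠ[𝓝 r] fun _ => 0 := by
      filter_upwards [lt_mem_nhds hr] with s hs using ψ3 s hs
    rw [this.deriv_eq]; simp
  have hψd : ∀ r, HasDerivAt ψ (deriv ψ r) r := fun r =>
    (cψ.differentiable one_ne_zero r).hasDerivAt
  have hg : ∀ z : Eu n, HasFDerivAt (fun z : Eu n => ψ ‖z‖) (deriv ψ ‖z‖ • innerSL ℝ (‖z‖⁻¹ • z)) z := by
    intro z
    rcases eq_or_ne z 0 with rfl | hz
    · have h0 : (fun z : Eu n => ψ ‖z‖) =ᶠ[𝓝 0] fun _ => 0 := by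
        filter_upwards [ball_mem_nhds (0 : Eu n) one_pos] with w hw
        exact ψ1 _ (by simpa using hw)
      have := (hasFDerivAt_const (𝕜 := ℝ) (0:ℝ) (0 : Eu n)).congr_of_eventuallyEq h0
      simpa using this
    · exact (hψd ‖z‖).comp_hasFDerivAt z (hasFDerivAt_norm' hz)
  have hWc : ContinuousOn W {0}ᶜ := fun z hz => (hD z hz).continuousAt.continuousWithinAt
  have hinv : ContinuousOn (fun z : Eu n => ‖z‖⁻¹) {0}ᶜ :=
    continuous_norm.continuousOn.inv₀ fun z hz => norm_ne_zero_iff.2 hz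
  -- integration by parts
  have ibp : ∀ i, ∫ z : Eu n, deriv ψ ‖z‖ * (⟪W z, EuclideanSpace.single i 1⟫_ℝ * ⟪‖z‖⁻¹ • z, EuclideanSpace.single i 1⟫_ℝ) =
      - ∫ z : Eu n, ψ ‖z‖ * ⟪D z (EuclideanSpace.single i 1), EuclideanSpace.single i 1⟫_ℝ := by
    intro i
    obtain ⟨e, he⟩ : ∃ e : Eu n, e = EuclideanSpace.single i 1 := ⟨_, rfl⟩
    rw [← he]
    have hf : ∀ z : Eu n, z ≠ 0 → HasFDerivAt (fun z => ⟪W z, e⟫_ℝ) ((innerSL ℝ e).comp (D z)) z := by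
      intro z hz
      have := (innerSL ℝ e).hasFDerivAt.comp z (hD z hz)
      refine this.congr_of_eventuallyEq (Filter.Eventually.of_forall fun w => ?_)
      simp [real_inner_comm]
    have e1 : ∀ z : Eu n, fderiv ℝ (fun z => ⟪W z, e⟫_ℝ) z e * ψ ‖z‖ = ψ ‖z‖ * ⟪D z e, e⟫_ℝ := by
      intro z
      rcases eq_or_ne z 0 with rfl | hz
      · rw [norm_zero, ψ1 0 one_pos]; simp
      · rw [(hf z hz).fderiv, mul_comm]; simp [real_inner_comm]
    have e2 : ∀ z : Eu n, ⟪W z, e⟫_ℝ * fderiv ℝ (fun z : Eu n => ψ ‖z‖) z e =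
        deriv ψ ‖z‖ * (⟪W z, e⟫_ℝ * ⟪‖z‖⁻¹ • z, e⟫_ℝ) := by
      intro z
      rw [(hg z).fderiv]
      simp only [smul_apply, innerSL_apply_apply, smul_eq_mul]
      ring
    have := integral_mul_fderiv_eq_neg_fderiv_mul_of_integrable (μ := (volume : Measure (Eu n)))
      (f := fun z => ⟪W z, e⟫_ℝ) (g := fun z : Eu n => ψ ‖z‖) (v := e) ?_ ?_ ?_ ?_ ?_
    · simp only [e1, e2] at this
      exact this
    · simp only [e1]
      exact integrable_cut cψ.continuous ψ1 ψ3 (by fun_prop)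
    · simp only [e2]
      exact integrable_cut cψ' dψ1 dψ3 (by fun_prop)
    · simp only [mul_comm _ (ψ _)]
      exact integrable_cut cψ.continuous ψ1 ψ3 (by fun_prop)
    · intro z hz
      apply (hf z _).differentiableAt
      rintro rfl
      refine (notMem_tsupport_iff_eventuallyEq.2 ?_) hz
      filter_upwards [ball_mem_nhds (0 : Eu n) one_pos] with w hw
      simpa using ψ1 _ (by simpa using hw)
    · exact fun z _ => (hg z).differentiableAt
  have hs := Finset.sum_congr rfl fun i (_ : i ∈ (Finset.univ : Finset (Fin (n+1)))) => ibp i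
  rw [Finset.sum_neg_distrib, ← integral_finsetSum, ← integral_finsetSum] at hs
  rotate_left
  · intro i _
    exact integrable_cut cψ.continuous ψ1 ψ3 (by fun_prop)
  · intro i _
    exact integrable_cut cψ' dψ1 dψ3 (by fun_prop)
  -- polar coordinates
  have f1 : ∀ z : Eu n, ∑ i, deriv ψ ‖z‖ * (⟪W z, EuclideanSpace.single i 1⟫_ℝ * ⟪‖z‖⁻¹ • z, EuclideanSpace.single i 1⟫_ℝ) =
      (fun r => deriv ψ r * r) ‖z‖ * (fun w => ⟪w, W w⟫_ℝ) (‖z‖⁻¹ • z) := by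
    intro z
    rcases eq_or_ne z 0 with rfl | hz
    · simp [dψ1 0 one_pos]
    · have hz' := norm_pos_iff.2 hz
      simp only
      rw [← Finset.mul_sum, mul_assoc, hW z hz _ (inv_pos.2 hz'), real_inner_smul_right,
        ← mul_assoc ‖z‖, mul_inv_cancel₀ hz'.ne', one_mul]
      congr 1
      simp [EuclideanSpace.inner_single_right, PiLp.inner_apply]
  have f2 : ∀ z : Eu n, ∑ i, ψ ‖z‖ * ⟪D z (EuclideanSpace.single i 1), EuclideanSpace.single i 1⟫_ℝ =
      ψ ‖z‖ * (fun w => ∑ i, ⟪D w (EuclideanSpace.single i 1), EuclideanSpace.single i 1⟫_ℝ) (‖z‖⁻¹ • z) := by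
    intro z
    rcases eq_or_ne z 0 with rfl | hz
    · simp [ψ1 0 one_pos]
    · simp only
      rw [← Finset.mul_sum, hDh z hz _ (inv_pos.2 (norm_pos_iff.2 hz))]
  simp only [f1, f2] at hs
  have p1 := polar_integral (n := n) (fun r => deriv ψ r * r) (fun w => ⟪w, W w⟫_ℝ)
  have p2 := polar_integral (n := n) ψ (fun w => ∑ i, ⟪D w (EuclideanSpace.single i 1), EuclideanSpace.single i 1⟫_ℝ)
  rw [p1, p2] at hs
  -- the one dimensional identity
  have q1 : ∫ r in Set.Ioi (0:ℝ), r ^ n * (deriv ψ r * r) = - ((n + 1) * ∫ r in Set.Ioi (0:ℝ), r ^ n * ψ r) := by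
    have c1 : ContDiff ℝ 1 fun r : ℝ => r ^ (n + 1) * ψ r := (contDiff_id.pow _).mul cψ
    have c2 : HasCompactSupport fun r : ℝ => r ^ (n + 1) * ψ r := hcs.mul_left
    have := c2.integral_Ioi_deriv_eq c1 0
    have d : ∀ r : ℝ, deriv (fun r : ℝ => r ^ (n + 1) * ψ r) r = (n + 1) * (r ^ n * ψ r) + r ^ n * (deriv ψ r * r) := by
      intro r
      have h0 := ((hasDerivAt_pow (n+1) r).mul (hψd r))
      have h1 : HasDerivAt (fun r : ℝ => r ^ (n+1) * ψ r) _ r := h0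
      rw [h1.deriv]
      push_cast
      ring
    simp only [d] at this
    rw [integral_add, integral_const_mul] at this
    · simp at this
      linarith
    · apply Integrable.integrableOn
      apply Integrable.const_mul
      exact (by have := cψ.continuous; fun_prop : Continuous fun r : ℝ => r ^ n * ψ r).integrable_of_hasCompactSupport hcs.mul_left
    · apply Integrable.integrableOn
      exact (by fun_prop : Continuous fun r : ℝ => r ^ n * (deriv ψ r * r)).integrable_of_hasCompactSupport
        (hcs.deriv.mul_right.mul_left)
  have q2 : 0 < ∫ r in Set.Ioi (0:ℝ), r ^ n * ψ r := by
    have cc : Continuous fun r : ℝ => r ^ n * ψ r := by have := cψ.continuous; fun_prop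
    have e : ∫ r in Set.Ioi (0:ℝ), r ^ n * ψ r = ∫ r, r ^ n * ψ r := by
      apply setIntegral_eq_integral_of_forall_compl_eq_zero
      intro r hr
      rw [Set.mem_Ioi, not_lt] at hr
      rw [ψ1 r (by linarith), mul_zero]
    rw [e]
    refine cc.integral_pos_of_hasCompactSupport_nonneg_nonzero hcs.mul_left (fun r => ?_) (x := 2) ?_
    · rcases lt_or_ge r 1 with h | h
      · simp [ψ1 r h]
      · have : 0 ≤ ψ r := hψ ▸ B.nonneg
        show 0 ≤ r ^ n * ψ r
        positivity
    · have : ψ 2 = 1 := by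
        rw [hψ]; exact B.one_of_mem_closedBall (mem_closedBall_self B.rIn_pos.le)
      rw [this]; positivity
  rw [q1] at hs
  have := mul_right_cancel₀ q2.ne' (a := ∫ x : Sph n, ∑ i, ⟪D (x : Eu n) (EuclideanSpace.single i 1), EuclideanSpace.single i 1⟫_ℝ ∂sphMeas n)
    (c := (n + 1) * ∫ x : Sph n, ⟪(x : Eu n), W x⟫_ℝ ∂sphMeas n) (by linarith)
  exact this

lemma sph_linear {n : ℕ} (hn : 1 ≤ n) (c : Eu n) : ∫ x : Sph n, ⟪(x : Eu n), c⟫_ℝ ∂sphMeas n = 0 := by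
  have h := sph_div (fun z : Eu n => ‖z‖ • c) (fun z => (innerSL ℝ (‖z‖⁻¹ • z)).smulRight c)
    (fun z hz => (hasFDerivAt_norm' hz).smul_const c) ?_ ?_ ?_
  · have e1 : ∀ x : Sph n, ∑ i, ⟪((innerSL ℝ (‖(x : Eu n)‖⁻¹ • (x : Eu n))).smulRight c) (EuclideanSpace.single i 1), EuclideanSpace.single i 1⟫_ℝ
        = ⟪(x : Eu n), c⟫_ℝ := by
      intro x
      rw [sph_norm]
      simp [real_inner_smul_left, EuclideanSpace.inner_single_right, PiLp.inner_apply, mul_comm]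
    have e2 : ∀ x : Sph n, ⟪(x : Eu n), ‖(x : Eu n)‖ • c⟫_ℝ = ⟪(x : Eu n), c⟫_ℝ := by
      intro x
      rw [sph_norm, one_smul]
    simp only [e1, e2] at h
    have hn' : (1:ℝ) ≤ n := by exact_mod_cast hn
    have : (n : ℝ) * ∫ x : Sph n, ⟪(x : Eu n), c⟫_ℝ ∂sphMeas n = 0 := by linarith
    rcases mul_eq_zero.1 this with h | h
    · linarith
    · exact h
  · have hinv : ContinuousOn (fun z : Eu n => ‖z‖⁻¹) {0}ᶜ :=
      continuous_norm.continuousOn.inv₀ fun z hz => norm_ne_zero_iff.2 hz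
    exact contOn_smulRight (by fun_prop) (by fun_prop)
  · intro z hz r hr
    rw [norm_smul, Real.norm_of_nonneg hr.le, mul_smul]
  · intro z hz r hr
    have := norm_pos_iff.2 hz
    rw [norm_smul, Real.norm_of_nonneg hr.le, smul_smul]
    congr 3
    field_simp

namespace IsSmoothConvexBody
variable {n : ℕ} {K : Set (Eu n)}

lemma I2 (hK : IsSmoothConvexBody K) :
    ∫ x : Sph n, (‖gradient (sfn K) (x : Eu n) - cK K‖ ^ 2 + sfn K x * trA K x) ∂sphMeas n =
      (n + 1) * ∫ x : Sph n, tsfn K x ^ 2 ∂sphMeas n := by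
  obtain ⟨c, hc⟩ : ∃ c, c = cK K := ⟨_, rfl⟩
  obtain ⟨X, hX⟩ : ∃ X, X = gradient (sfn K) := ⟨_, rfl⟩
  have hXd : ∀ z : Eu n, z ≠ 0 → HasFDerivAt X (hessA K z) z := fun z hz => hX ▸ hK.hasFDerivAt_grad hz
  have hhd : ∀ z : Eu n, z ≠ 0 → HasFDerivAt (sfn K) (innerSL ℝ (X z)) z := fun z hz => hX ▸ hK.hasFDerivAt hz
  have cX : ContinuousOn X {0}ᶜ := fun z hz => (hXd z hz).continuousAt.continuousWithinAt
  have ch : ContinuousOn (sfn K) {0}ᶜ := fun z hz => (hhd z hz).continuousAt.continuousWithinAt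
  have cA : ContinuousOn (hessA K) {0}ᶜ := fun z hz => (hK.hess_contDiffAt hz).continuousAt.continuousWithinAt
  have cc : ContinuousOn (fun z => (sfn K z • hessA K z + (innerSL ℝ (X z)).smulRight (X z)) -
      (innerSL ℝ (X z)).smulRight ((2:ℝ) • c) + (innerSL ℝ c).smulRight c) {0}ᶜ := by
    have c1 : ContinuousOn (fun z => (innerSL ℝ (X z)).smulRight (X z)) {0}ᶜ :=
      contOn_smulRight (by fun_prop) cX
    have c2 : ContinuousOn (fun z => (innerSL ℝ (X z)).smulRight ((2:ℝ) • c)) {0}ᶜ :=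
      contOn_smulRight (by fun_prop) (by fun_prop)
    fun_prop
  have h := sph_div (fun z : Eu n => sfn K z • X z - (sfn K z • ((2:ℝ) • c)) + innerSL ℝ c z • c)
    (fun z => (sfn K z • hessA K z + (innerSL ℝ (X z)).smulRight (X z)) -
      (innerSL ℝ (X z)).smulRight ((2:ℝ) • c) + (innerSL ℝ c).smulRight c)
    (fun z hz => (((hhd z hz).smul (hXd z hz)).sub ((hhd z hz).smul_const _)).add
      ((innerSL ℝ c).hasFDerivAt.smul_const c)) cc ?_ ?_
  · have e1 : ∀ x : Sph n, ∑ i, ⟪((sfn K x • hessA K x + (innerSL ℝ (X x)).smulRight (X x)) -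
      (innerSL ℝ (X x)).smulRight ((2:ℝ) • c) + (innerSL ℝ c).smulRight c) (EuclideanSpace.single i 1), EuclideanSpace.single i 1⟫_ℝ
        = ‖gradient (sfn K) (x : Eu n) - cK K‖ ^ 2 + sfn K x * trA K x := by
      intro x
      rw [← hX, ← hc, ← sum_inner_sq, trA, Finset.mul_sum, ← Finset.sum_add_distrib]
      apply Finset.sum_congr rfl
      intro i _
      simp only [add_apply, sub_apply, smul_apply, ContinuousLinearMap.smulRight_apply, innerSL_apply_apply,
        inner_add_left, inner_sub_left, real_inner_smul_left]
      ring
    have e2 : ∀ x : Sph n, ⟪(x : Eu n), sfn K x • X x - (sfn K x • ((2:ℝ) • c)) + innerSL ℝ c (x : Eu n) • c⟫_ℝ = tsfn K x ^ 2 := by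
      intro x
      rw [inner_add_right, inner_sub_right, real_inner_smul_right, real_inner_smul_right,
        real_inner_smul_right, real_inner_smul_right, innerSL_apply_apply, hX, hK.inner_grad (sph_ne x),
        real_inner_comm (x : Eu n) c, tsfn, hc]
      ring
    simp only [e1, e2] at h
    exact h
  · intro z hz r hr
    simp only [hX]
    rw [hK.sfn_smul z hr.le, hK.grad_smul hz hr, map_smul]
    simp only [smul_add, smul_sub, smul_smul, smul_eq_mul, mul_assoc]
  · intro z hz r hr
    simp only [hX]
    rw [hK.sfn_smul z hr.le, hK.grad_smul hz hr, hK.hess_smul hz hr, smul_smul]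
    congr 4
    field_simp

end IsSmoothConvexBody

lemma final_arith {N P H T m M W E a2 : ℝ} (hN : 1 ≤ N) (hm : 0 < m)
    (hPT : P + T = (N + 1) * H)
    (h1 : N * (m * P) ≤ M * T) (hE : E = H - W * a2) (h3 : N * E ≤ P - H) (hM : m ≤ M)
    (hW : 0 < W) (ha : 0 < a2) (hE0 : 0 ≤ E) : E / (W * a2) ≤ M / m - 1 := by
  have hw : 0 < W * a2 := mul_pos hW ha
  have hMm : M / m - 1 = (M - m) / m := by field_simp
  rw [hMm, div_le_div_iff₀ hw hm]
  have hT : T = (N + 1) * H - P := by linarith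
  subst hT
  have hH : H = E + W * a2 := by linarith
  have k1 : (N * m + M) * (H + N * E) ≤ (N * m + M) * P :=
    mul_le_mul_of_nonneg_left (by linarith) (by nlinarith)
  have k2 : N * ((N + 1) * m * E) ≤ N * ((M - m) * (W * a2)) := by
    rw [hH] at k1 h1
    nlinarith
  have k3 : (N + 1) * m * E ≤ (M - m) * (W * a2) := le_of_mul_le_mul_left k2 (by linarith)
  have k4 : 0 ≤ N * (m * E) := by positivity
  nlinarith

/-- **Stability of the cone-volume measure with near constant density.** There is
`γ = γ(n) > 0` such that `δ₂(K̄, B) ≤ γ (M/m − 1)^{1/2}`, where `M = max h/𝒦`,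
`m = min h/𝒦`, and `K̄ = (K − c(K))/(⨍ h̃ dθ)` has support function `h̃ / ⨍ h̃ dθ`. -/
theorem stability_of_cone_volume_measure (n : ℕ) (hn : 1 ≤ n) :
    ∃ γ : ℝ, 0 < γ ∧
      ∀ K : Set (Eu n), IsSmoothConvexBody K →
        ∀ M m : ℝ,
          IsGreatest (Set.range fun x : Sph n => dens K (x : Eu n)) M →
          IsLeast (Set.range fun x : Sph n => dens K (x : Eu n)) m →
          Real.sqrt (⨍ x : Sph n,
              (tsfn K (x : Eu n) / (⨍ y : Sph n, tsfn K (y : Eu n) ∂sphMeas n) - 1) ^ 2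
                ∂sphMeas n) ≤
            γ * Real.sqrt (M / m - 1) := by
  refine ⟨1, one_pos, fun K hK M m hM hm => ?_⟩
  rw [one_mul]
  apply Real.sqrt_le_sqrt
  have cX := hK.cont_X
  have ct := hK.cont_t
  have ch := hK.cont_h
  have ctr := hK.cont_trA
  have cd := hK.cont_dens
  obtain ⟨W, hW⟩ : ∃ W, W = (sphMeas n).real Set.univ := ⟨_, rfl⟩
  have hW0 : 0 < W := by
    rw [hW, Measure.real, ENNReal.toReal_pos_iff]
    exact ⟨Measure.measure_univ_pos.2 (sphMeas_ne_zero n), measure_lt_top _ _⟩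
  obtain ⟨a, ha⟩ : ∃ a, a = ⨍ y : Sph n, tsfn K (y : Eu n) ∂sphMeas n := ⟨_, rfl⟩
  rw [← ha]
  have hIt : ∫ x : Sph n, tsfn K x ∂sphMeas n = W * a := by
    rw [ha, average_eq, ← hW, smul_eq_mul]
    field_simp
  have cl : Continuous fun x : Sph n => ⟪(x : Eu n), cK K⟫_ℝ := by fun_prop
  have hIh : ∫ x : Sph n, tsfn K x ∂sphMeas n = ∫ x : Sph n, sfn K x ∂sphMeas n := by
    unfold tsfn
    rw [integral_sub (sph_integrable ch) (sph_integrable cl), sph_linear hn, sub_zero]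
  obtain ⟨x0, hx0⟩ := hm.1
  have hm0 : 0 < m := by rw [← hx0]; exact hK.dens_pos x0
  have hmM : m ≤ M := by rw [← hx0]; exact hM.2 ⟨x0, rfl⟩
  have hIpos : 0 < ∫ x : Sph n, sfn K x ∂sphMeas n :=
    integral_pos_of_integrable_nonneg_nonzero (x := x0) ch (sph_integrable ch)
      (fun x => (hK.pos x).le) (hK.pos x0).ne'
  have ha0 : 0 < a := by
    rw [← hIh, hIt] at hIpos
    exact pos_of_mul_pos_right hIpos hW0.le
  have hc : ∀ r : ℝ, ∫ x : Sph n, r ∂sphMeas n = W * r := by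
    intro r
    rw [integral_const, ← hW, smul_eq_mul]
  have hz : ∫ x : Sph n, (tsfn K x - a) ∂sphMeas n = 0 := by
    rw [integral_sub (sph_integrable ct) (integrable_const _), hIt, hc, sub_self]
  have h3 := hK.I3 a hz
  have cP : Continuous fun x : Sph n => ‖gradient (sfn K) (x : Eu n) - cK K‖ ^ 2 := by fun_prop
  have cH : Continuous fun x : Sph n => tsfn K (x : Eu n) ^ 2 := by fun_prop
  have cT : Continuous fun x : Sph n => sfn K (x : Eu n) * IsSmoothConvexBody.trA K (x : Eu n) := by fun_prop
  rw [integral_sub (sph_integrable cP) (sph_integrable cH)] at h3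
  have h2 := hK.I2
  rw [integral_add (sph_integrable cP) (sph_integrable cT)] at h2
  have h1 := hK.I1
  have l1 : m * ∫ x : Sph n, ‖gradient (sfn K) (x : Eu n) - cK K‖ ^ 2 ∂sphMeas n ≤
      ∫ x : Sph n, ‖gradient (sfn K) (x : Eu n) - cK K‖ ^ 2 * dens K x ∂sphMeas n := by
    rw [← integral_const_mul]
    refine integral_mono ((sph_integrable cP).const_mul _) (sph_integrable (cP.mul cd)) fun x => ?_
    show m * ‖gradient (sfn K) (x : Eu n) - cK K‖ ^ 2 ≤ ‖gradient (sfn K) (x : Eu n) - cK K‖ ^ 2 * dens K x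
    rw [mul_comm]
    exact mul_le_mul_of_nonneg_left (hm.2 ⟨x, rfl⟩) (by positivity)
  have l2 : ∫ x : Sph n, (sfn K x * IsSmoothConvexBody.trA K x) * dens K x ∂sphMeas n ≤
      M * ∫ x : Sph n, sfn K x * IsSmoothConvexBody.trA K x ∂sphMeas n := by
    rw [← integral_const_mul]
    refine integral_mono (sph_integrable (cT.mul cd)) ((sph_integrable cT).const_mul _) fun x => ?_
    show (sfn K x * IsSmoothConvexBody.trA K x) * dens K x ≤ M * (sfn K x * IsSmoothConvexBody.trA K x)
    rw [mul_comm M]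
    refine mul_le_mul_of_nonneg_left (hM.2 ⟨x, rfl⟩) (mul_nonneg (hK.pos x).le ?_)
    exact Finset.sum_nonneg fun i _ => hK.hess_quad_nonneg x _
  have hn' : (1:ℝ) ≤ n := by exact_mod_cast hn
  have hE : ∫ x : Sph n, (tsfn K x - a) ^ 2 ∂sphMeas n = ∫ x : Sph n, tsfn K x ^ 2 ∂sphMeas n - W * a ^ 2 := by
    have e : ∀ x : Sph n, (tsfn K x - a) ^ 2 = tsfn K x ^ 2 - ((2 * a) * tsfn K x - a ^ 2) := fun x => by ring
    simp only [e]
    rw [integral_sub (sph_integrable cH) (sph_integrable (by fun_prop : Continuous fun x : Sph n => (2 * a) * tsfn K x - a ^ 2)),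
      integral_sub ((sph_integrable ct).const_mul _) (integrable_const _), integral_const_mul, hIt, hc]
    ring
  have hfin : ⨍ x : Sph n, (tsfn K (x : Eu n) / a - 1) ^ 2 ∂sphMeas n =
      (∫ x : Sph n, (tsfn K x - a) ^ 2 ∂sphMeas n) / (W * a ^ 2) := by
    have e : ∀ x : Sph n, (tsfn K x / a - 1) ^ 2 = (a ^ 2)⁻¹ * (tsfn K x - a) ^ 2 := fun x => by
      field_simp
    simp only [e]
    rw [average_eq, integral_const_mul, ← hW, smul_eq_mul]
    field_simp
  rw [hfin]
  refine final_arith hn' hm0 h2 ?_ hE h3 hmM hW0 (by positivity) (integral_nonneg fun x => by positivity)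
  exact (mul_le_mul_of_nonneg_left l1 (by linarith)).trans (h1.trans l2)
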